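/- arXiv:2409.06810 — 2 statements merged into one kernel-verified Lean document; each statement's English description precedes it below -/
import Mathlib

section
/- Let k ≥ 4 be an integer, let H be a 2-contractible ℓ-overlapping k-tree with t edges and cross-cut number σ = σ(H), and let ε > 0. Then there exists a constant K > 0 such that for all sufficiently large n there is a collection 𝒞 of k-graphs on [n] with |𝒞| ≤ exp(K·(log n)²·C(n,k−1)/n^{k−ℓ−1}) such that every H-free k-graph I on [n] is contained in some C ∈ 𝒞, and every C ∈ 𝒞 satisfies |C| ≤ (σ − 1 + ε)·C(n,k−1). -/
open Finset Filter

attribute [local instance] Classical.propDecidable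

/-- The vertex set `[n] = {1,…,n}`. -/
def vtx (n : ℕ) : Finset ℕ := Finset.Icc 1 n

/-- `F` is a `k`-graph on `[n]`: a family of `k`-element subsets of `[n]`. -/
def IsKGraphOn (k n : ℕ) (F : Finset (Finset ℕ)) : Prop :=
  ∀ E ∈ F, E ⊆ vtx n ∧ E.card = k

/-- The vertex set of a hypergraph (union of its edges). -/
def vertexSet {α : Type} [DecidableEq α] (H : Finset (Finset α)) : Finset α := H.sup id

/-- The degree of a vertex: the number of edges containing it. -/
def vdeg {α : Type} [DecidableEq α] (H : Finset (Finset α)) (v : α) : ℕ :=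
  (H.filter fun E => v ∈ E).card

/-- Hypertrees, defined recursively: a single edge is a hypertree, and a hypertree grows
by adding a new leaf edge `E` whose intersection with the current vertex set equals its
intersection with some existing (parent) edge `F`. -/
inductive IsHypertree {α : Type} [DecidableEq α] : Finset (Finset α) → Prop
  | single (E : Finset α) : IsHypertree {E}
  | grow {H : Finset (Finset α)} (E F : Finset α) (hH : IsHypertree H) (hE : E ∉ H)
      (hF : F ∈ H) (hint : E ∩ vertexSet H = E ∩ F) : IsHypertree (insert E H)

/-- A `k`-tree: a `k`-uniform hypertree. -/
def IsKTree {α : Type} [DecidableEq α] (k : ℕ) (H : Finset (Finset α)) : Prop :=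
  IsHypertree H ∧ ∀ E ∈ H, E.card = k

/-- A hypergraph is 2-contractible if every edge contains at least two vertices of degree 1. -/
def TwoContractible {α : Type} [DecidableEq α] (H : Finset (Finset α)) : Prop :=
  ∀ E ∈ H, 2 ≤ (E.filter fun v => vdeg H v = 1).card

/-- `S` is a cross-cut of `H`: every edge meets `S` in exactly one vertex. -/
def IsCrosscut {α : Type} [DecidableEq α] (H : Finset (Finset α)) (S : Finset α) : Prop :=
  ∀ E ∈ H, (E ∩ S).card = 1

/-- `σ` is the cross-cut number of `H`: the minimum size of a cross-cut. -/
def IsCrosscutNumber {α : Type} [DecidableEq α] (H : Finset (Finset α)) (σ : ℕ) : Prop :=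
  IsLeast {m | ∃ S : Finset α, IsCrosscut H S ∧ S.card = m} σ

/-- A hypergraph is `ℓ`-overlapping if any two distinct edges meet in at most `ℓ` vertices. -/
def Overlapping {α : Type} [DecidableEq α] (ℓ : ℕ) (H : Finset (Finset α)) : Prop :=
  ∀ E ∈ H, ∀ F ∈ H, E ≠ F → (E ∩ F).card ≤ ℓ

/-- `K` is (the edge set of) a copy of `H`, i.e. the image of `H` under a map that is
injective on the vertex set of `H`. -/
def IsCopyOf {α : Type} [DecidableEq α] (H : Finset (Finset α)) (K : Finset (Finset ℕ)) : Prop :=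
  ∃ φ : α → ℕ, Set.InjOn φ ↑(vertexSet H) ∧ K = H.image fun E => E.image φ

/-- `F` contains no subgraph isomorphic to `H`. -/
def HFree {α : Type} [DecidableEq α] (H : Finset (Finset α)) (F : Finset (Finset ℕ)) : Prop :=
  ∀ K ⊆ F, ¬ IsCopyOf H K

/-- The collection of copies of `H` in `F` (as distinct subgraphs of `F`). -/
noncomputable def copies {α : Type} [DecidableEq α] (H : Finset (Finset α))
    (F : Finset (Finset ℕ)) : Finset (Finset (Finset ℕ)) :=
  F.powerset.filter (IsCopyOf H)

/-- The number of `H`-free `k`-graphs on the vertex set `[n]`. -/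
noncomputable def forb {α : Type} [DecidableEq α] (n k : ℕ) (H : Finset (Finset α)) : ℕ :=
  (((vtx n).powersetCard k).powerset.filter (HFree H)).card

/-- `H` is a `k`-uniform linear cycle of length `ℓ`. -/
def IsLinearCycle {α : Type} [DecidableEq α] (k ℓ : ℕ) (H : Finset (Finset α)) : Prop :=
  ∃ E : ℕ → Finset α,
    (∀ i < ℓ, (E i).card = k) ∧
    (∀ i < ℓ, ∀ j < ℓ, i ≠ j → E i ≠ E j) ∧
    (∀ i < ℓ, (E i ∩ E ((i + 1) % ℓ)).card = 1) ∧
    (∀ i < ℓ, ∀ j < ℓ, i ≠ j → E i ∩ E ((i + 1) % ℓ) ≠ E j ∩ E ((j + 1) % ℓ)) ∧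
    (∀ i < ℓ, ∀ j < ℓ, i ≠ j → (i + 1) % ℓ ≠ j → (j + 1) % ℓ ≠ i → Disjoint (E i) (E j)) ∧
    H = (Finset.range ℓ).image E

/-- `(X 0, …, X (k-1))` is a `k`-partition of `F`. -/
def IsKPartition (k : ℕ) (F : Finset (Finset ℕ)) (X : Fin k → Finset ℕ) : Prop :=
  (∀ i j, i ≠ j → Disjoint (X i) (X j)) ∧ ∀ E ∈ F, ∀ i, (E ∩ X i).card = 1

/-- The `J`-projection of an edge. -/
def projJ {k : ℕ} (X : Fin k → Finset ℕ) (J : Finset (Fin k)) (E : Finset ℕ) : Finset ℕ :=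
  E ∩ J.sup X

/-- The pattern of a vertex set. -/
def pattern {k : ℕ} (X : Fin k → Finset ℕ) (D : Finset ℕ) : Finset (Fin k) :=
  Finset.univ.filter fun i => (D ∩ X i).Nonempty

/-- `MI(F)`: the patterns of intersections of pairs of distinct edges. -/
noncomputable def MI {k : ℕ} (F : Finset (Finset ℕ)) (X : Fin k → Finset ℕ) :
    Finset (Finset (Fin k)) :=
  ((F ×ˢ F).filter fun p => p.1 ≠ p.2).image fun p => pattern X (p.1 ∩ p.2)

/-- The link of a vertex set `D` in `F`. -/
def link {α : Type} [DecidableEq α] (F : Finset (Finset α)) (D : Finset α) :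
    Finset (Finset α) :=
  (F.filter fun E => D ⊆ E).image fun E => E \ D

/-- The degree of a vertex set `D` in `F`: the size of its link. -/
def setDeg {α : Type} [DecidableEq α] (F : Finset (Finset α)) (D : Finset α) : ℕ :=
  (link F D).card

/-- A nonempty hypergraph is `s`-diverse if every vertex has degree less than `|H|/s`. -/
def SDiverse {α : Type} [DecidableEq α] (s : ℕ) (H : Finset (Finset α)) : Prop :=
  H.Nonempty ∧ ∀ v : α, s * vdeg H v < H.card

/-- `D` is `s`-strong in `F` if its link is `s`-diverse. -/
def SStrong {α : Type} [DecidableEq α] (s : ℕ) (F : Finset (Finset α)) (D : Finset α) : Prop :=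
  SDiverse s (link F D)

/-- `F`, with `k`-partition `X`, is `s`-super-homogeneous: for every `J ∈ MI(F)` and every
edge `E ∈ F`, the projection `E_J` is `s`-strong and `d_F(E_J) ≥ max{s, |F|/(2k·n^|J|)}`. -/
def SuperHomogeneous (n k s : ℕ) (F : Finset (Finset ℕ)) (X : Fin k → Finset ℕ) : Prop :=
  ∀ J ∈ MI F X, ∀ E ∈ F,
    SStrong s F (projJ X J E) ∧
    s ≤ setDeg F (projJ X J E) ∧
    (F.card : ℝ) / (2 * k * (n : ℝ) ^ J.card) ≤ (setDeg F (projJ X J E) : ℝ)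

/-- The rank of a family of subsets of `[k]`: the minimum size of a set `D ⊆ [k]` contained
in no member of the family. -/
noncomputable def rankFam (k : ℕ) (𝒥 : Finset (Finset (Fin k))) : ℕ :=
  sInf {d | ∃ D : Finset (Fin k), D.card = d ∧ ∀ J ∈ 𝒥, ¬ D ⊆ J}

/-- A family of subsets of `[k]` is of type 1 if it contains the full power set of some
`(k-2)`-set `B`. -/
def TypeOne (k : ℕ) (𝒥 : Finset (Finset (Fin k))) : Prop :=
  ∃ B : Finset (Fin k), B.card = k - 2 ∧ ∀ S ⊆ B, S ∈ 𝒥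

/-- The constant `c(k,s) = k!/(k^k·(2s(1+2^k))^(2^k))`. -/
noncomputable def cks (k s : ℕ) : ℝ :=
  (Nat.factorial k : ℝ) / ((k : ℝ) ^ k * (2 * (s : ℝ) * (1 + 2 ^ k)) ^ (2 ^ k))

/-- Degree of a set of vertices in a (uniform) hypergraph `K`: number of edges containing it. -/
def uDeg {α : Type} [DecidableEq α] (K : Finset (Finset α)) (S : Finset α) : ℕ :=
  (K.filter fun e => S ⊆ e).card

/-- A `t`-uniform hypergraph is `d`-graded if `d_K(S) ≤ d^(t-|S|)` for all `S` with
`1 ≤ |S| ≤ t`. -/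
def Graded {α : Type} [DecidableEq α] (t : ℕ) (d : ℝ) (K : Finset (Finset α)) : Prop :=
  ∀ S : Finset α, 1 ≤ S.card → S.card ≤ t → (uDeg K S : ℝ) ≤ d ^ (t - S.card)

/-- `S` is saturated by `K`: `d_K(S) = ⌊d^(t-|S|)⌋`. -/
def Saturated {α : Type} [DecidableEq α] (t : ℕ) (d : ℝ) (K : Finset (Finset α))
    (S : Finset α) : Prop :=
  uDeg K S = ⌊d ^ (t - S.card)⌋₊

/-- `S` is admissible: no nonempty subset of `S` is saturated. -/
def Admissible {α : Type} [DecidableEq α] (t : ℕ) (d : ℝ) (K : Finset (Finset α))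
    (S : Finset α) : Prop :=
  ∀ S' ⊆ S, S'.Nonempty → ¬ Saturated t d K S'

/-- `Z_K(S)`: the vertices `v` such that `S ∪ {v}` is inadmissible and `{v}` is not
saturated. -/
noncomputable def Zset {α : Type} [DecidableEq α] (t : ℕ) (d : ℝ) (K : Finset (Finset α))
    (S : Finset α) : Finset α :=
  (vertexSet K).filter fun v => ¬ Admissible t d K (insert v S) ∧ ¬ Saturated t d K {v}

/-- `ex(G,H)`: the maximum number of edges of an `H`-free subgraph of `G`. -/
noncomputable def exIn {α : Type} [DecidableEq α] (H : Finset (Finset α))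
    (G : Finset (Finset ℕ)) : ℕ :=
  (G.powerset.filter (HFree H)).sup Finset.card

/-- The probability, in the random `k`-graph `G^(k)(n,p)` (each `k`-subset of `[n]` is an
edge independently with probability `p`), of the event `A`. -/
noncomputable def probEvent (k n : ℕ) (p : ℝ) (A : Finset (Finset ℕ) → Prop) : ℝ :=
  ∑ G ∈ ((vtx n).powersetCard k).powerset.filter A,
    p ^ G.card * (1 - p) ^ (((vtx n).powersetCard k).card - G.card)


/-! ### Peeling -/

/-- `Y` is rich. -/
def RichF (B : Finset ℕ → Finset ℕ) (ℓ : ℕ) (ok : Finset ℕ → Prop)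
    (Y : Finset (Finset ℕ)) : Prop :=
  ∀ E ∈ Y, ∀ Q ⊆ B E, Q.card ≤ ℓ → ∀ T, ok T → ∃ E' ∈ Y, Q ⊆ B E' ∧ Disjoint T (E' \ Q)

/-- `E` is caught by the record `(T, r)`. -/
def Caught (B : Finset ℕ → Finset ℕ) (ℓ : ℕ) (T : Finset ℕ → Finset ℕ) (r : Finset ℕ → ℕ)
    (E : Finset ℕ) : Prop :=
  ∃ Q ⊆ B E, Q.card ≤ ℓ ∧ ¬ Disjoint (T Q) (E \ Q) ∧
    ∀ Q' ⊆ B E, Q'.card ≤ ℓ → Q' ≠ Q → r Q < r Q'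

lemma peel (B : Finset ℕ → Finset ℕ) (ℓ : ℕ) (ok : Finset ℕ → Prop) (h0 : ok ∅)
    (X : Finset (Finset ℕ)) : (∀ Y ⊆ X, Y.Nonempty → ¬ RichF B ℓ ok Y) →
    ∃ (T : Finset ℕ → Finset ℕ) (r : Finset ℕ → ℕ), (∀ Q, ok (T Q)) ∧
      ∀ E ∈ X, Caught B ℓ T r E := by
  induction X using Finset.strongInduction with
  | H X ih =>
    intro h
    rcases X.eq_empty_or_nonempty with rfl | hne
    · exact ⟨fun _ => ∅, fun _ => 0, fun _ => h0, by simp⟩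
    have hX := h X (Finset.Subset.refl _) hne
    unfold RichF at hX
    push Not at hX
    obtain ⟨E0, hE0, Q0, hQ0, hQc, T0, hT0, hno⟩ := hX
    have hss : (X.filter fun E => ¬ Q0 ⊆ B E) ⊂ X := by
      rw [Finset.ssubset_iff_of_subset (Finset.filter_subset _ _)]
      exact ⟨E0, hE0, by simp [hQ0]⟩
    obtain ⟨T1, r1, hok, hc⟩ := ih _ hss (fun Y hY => h Y (hY.trans (Finset.filter_subset _ _)))
    refine ⟨fun Q => if Q = Q0 then T0 else T1 Q, fun Q => if Q = Q0 then 0 else r1 Q + 1, ?_, ?_⟩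
    · intro Q
      by_cases hq : Q = Q0 <;> simp [hq, hT0, hok]
    · intro E hE
      by_cases hq : Q0 ⊆ B E
      · refine ⟨Q0, hq, hQc, ?_, ?_⟩
        · simpa using hno E hE hq
        · intro Q' _ _ hne'
          simp [hne']
      · obtain ⟨Q, hQB, hQl, hQd, hQr⟩ := hc E (by simp [hE, hq])
        have hQne : Q ≠ Q0 := by rintro rfl; exact hq hQB
        refine ⟨Q, hQB, hQl, by simpa [hQne] using hQd, ?_⟩
        intro Q' h1 h2 h3
        have hQne' : Q' ≠ Q0 := by rintro rfl; exact hq h1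
        simpa [hQne, hQne'] using hQr Q' h1 h2 h3

/-- small subsets of `[n]` -/
def smSets (n ℓ : ℕ) : Finset (Finset ℕ) := (vtx n).powerset.filter fun Q => Q.card ≤ ℓ

lemma mem_smSets {n ℓ : ℕ} {Q : Finset ℕ} :
    Q ∈ smSets n ℓ ↔ Q ⊆ vtx n ∧ Q.card ≤ ℓ := by
  simp [smSets]

lemma card_smSets (n ℓ : ℕ) : (smSets n ℓ).card ≤ (n + 1) ^ ℓ := by
  induction ℓ with
  | zero =>
    have : smSets n 0 ⊆ {∅} := by
      intro Q hQ
      rw [mem_smSets] at hQ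
      simpa using hQ.2
    simpa using Finset.card_le_card this
  | succ ℓ ih =>
    have hsub : smSets n (ℓ + 1) ⊆
        ((smSets n ℓ) ×ˢ (Finset.range (n + 1))).image
          (fun p => if p.2 = 0 then p.1 else insert p.2 p.1) := by
      intro Q hQ
      rw [mem_smSets] at hQ
      rw [Finset.mem_image]
      rcases Q.eq_empty_or_nonempty with rfl | ⟨y, hy⟩
      · exact ⟨(∅, 0), by simp [mem_smSets], by simp⟩
      · have hyv := hQ.1 hy
        simp only [vtx, Finset.mem_Icc] at hyv
        refine ⟨(Q.erase y, y), ?_, ?_⟩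
        · rw [Finset.mem_product, mem_smSets, Finset.mem_range]
          refine ⟨⟨(Finset.erase_subset _ _).trans hQ.1, ?_⟩, by simp; omega⟩
          have := Finset.card_erase_of_mem hy
          simp only
          omega
        · have : y ≠ 0 := by omega
          simp [this, Finset.insert_erase hy]
    calc _ ≤ _ := Finset.card_le_card hsub
      _ ≤ _ := Finset.card_image_le
      _ = (smSets n ℓ).card * (n + 1) := by rw [Finset.card_product, Finset.card_range]
      _ ≤ (n + 1) ^ ℓ * (n + 1) := Nat.mul_le_mul_right _ ih
      _ = _ := by rw [pow_succ]

/-- admissible tests -/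
def okT (n m q : ℕ) (L : Finset ℕ) (T : Finset ℕ) : Prop :=
  T ⊆ vtx n ∧ T.card ≤ m ∧ (T ∩ L).card ≤ q

lemma generic_containers (n ℓ m q : ℕ) (L : Finset ℕ) (B : Finset ℕ → Finset ℕ)
    (X : Finset (Finset ℕ)) (hX : ∀ E ∈ X, B E ⊆ vtx n) :
    ∃ 𝒞 : Finset (Finset (Finset ℕ)),
      𝒞.card ≤ ((n + 1) ^ (m + ℓ)) ^ ((n + 1) ^ ℓ) ∧
      (∀ C ∈ 𝒞, C ⊆ X ∧ ∃ (T : Finset ℕ → Finset ℕ) (r : Finset ℕ → ℕ),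
        (∀ Q, okT n m q L (T Q)) ∧ ∀ E ∈ C, Caught B ℓ T r E) ∧
      ∀ I ⊆ X, (∀ Y ⊆ I, Y.Nonempty → ¬ RichF B ℓ (okT n m q L) Y) → ∃ C ∈ 𝒞, I ⊆ C := by
  classical
  have ok0 : okT n m q L ∅ := by simp [okT]
  set K := smSets n ℓ with hK
  set A := ((smSets n m).filter (okT n m q L)) ×ˢ (Finset.range ((n + 1) ^ ℓ)) with hA
  let ext : (↥K → ↥A) → Finset ℕ → Finset ℕ × ℕ :=
    fun f Q => if h : Q ∈ K then (f ⟨Q, h⟩).1 else (∅, 0)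
  let cont : (↥K → ↥A) → Finset (Finset ℕ) := fun f =>
    X.filter (Caught B ℓ (fun Q => (ext f Q).1) (fun Q => (ext f Q).2))
  refine ⟨Finset.univ.image cont, ?_, ?_, ?_⟩
  · refine Finset.card_image_le.trans ?_
    rw [Finset.card_univ, Fintype.card_fun, Fintype.card_coe, Fintype.card_coe]
    have h1 : A.card ≤ (n + 1) ^ (m + ℓ) := by
      rw [hA, Finset.card_product, Finset.card_range, pow_add]
      exact Nat.mul_le_mul_right _
        ((Finset.card_le_card (Finset.filter_subset _ _)).trans (card_smSets n m))
    calc _ ≤ ((n + 1) ^ (m + ℓ)) ^ K.card := Nat.pow_le_pow_left h1 _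
      _ ≤ _ := Nat.pow_le_pow_right (by positivity) (card_smSets n ℓ)
  · intro C hC
    rw [Finset.mem_image] at hC
    obtain ⟨f, -, rfl⟩ := hC
    refine ⟨Finset.filter_subset _ _, fun Q => (ext f Q).1, fun Q => (ext f Q).2, ?_, ?_⟩
    · intro Q
      by_cases h : Q ∈ K
      · simp only [ext, h, dif_pos]
        have := (f ⟨Q, h⟩).2
        exact (Finset.mem_filter.1 (Finset.mem_product.1 this).1).2
      · simpa only [ext, h, dif_neg, not_false_eq_true] using ok0
    · intro E hE
      exact (Finset.mem_filter.1 hE).2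
  · intro I hI hno
    obtain ⟨T, r, hok, hc⟩ := peel B ℓ _ ok0 I hno
    have hmem : ∀ Q : ↥K, (T Q, (K.filter fun Q' => r Q' < r Q).card) ∈ A := by
      intro Q
      rw [hA, Finset.mem_product, Finset.mem_filter, Finset.mem_range, mem_smSets]
      refine ⟨⟨⟨(hok _).1, (hok _).2.1⟩, hok _⟩, ?_⟩
      refine lt_of_lt_of_le ?_ (card_smSets n ℓ)
      show (K.filter fun Q' => r Q' < r Q).card < _
      apply Finset.card_lt_card
      rw [Finset.ssubset_iff_of_subset (Finset.filter_subset _ _)]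
      exact ⟨Q, Q.2, by simp⟩
    let f0 : ↥K → ↥A := fun Q => ⟨(T Q, (K.filter fun Q' => r Q' < r Q).card), hmem Q⟩
    refine ⟨cont f0, Finset.mem_image.2 ⟨f0, Finset.mem_univ f0, rfl⟩, ?_⟩
    intro E hE
    refine Finset.mem_filter.2 ⟨hI hE, ?_⟩
    obtain ⟨Q, hQB, hQl, hQd, hQr⟩ := hc E hE
    have hBv := hX E (hI hE)
    have key : ∀ Q' ⊆ B E, Q'.card ≤ ℓ → Q' ∈ K := fun Q' h1 h2 =>
      mem_smSets.2 ⟨h1.trans hBv, h2⟩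
    refine ⟨Q, hQB, hQl, ?_, ?_⟩
    · simpa only [ext, f0, key Q hQB hQl, dif_pos] using hQd
    · intro Q' h1 h2 h3
      simp only [ext, f0, key Q hQB hQl, key Q' h1 h2, dif_pos]
      apply Finset.card_lt_card
      have hlt := hQr Q' h1 h2 h3
      rw [Finset.ssubset_iff_of_subset]
      · exact ⟨Q, by simp [key Q hQB hQl, hlt], by simp⟩
      · intro Z hZ
        rw [Finset.mem_filter] at hZ ⊢
        exact ⟨hZ.1, hZ.2.trans hlt⟩


/-! ### Embedding -/

lemma ext1 {α : Type} [DecidableEq α] (φ : α → ℕ) (V P : Finset α) (Q : Finset ℕ)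
    (hφ : Set.InjOn φ ↑V) (hPV : Disjoint P V) (hc : P.card = Q.card)
    (hQ : Disjoint (V.image φ) Q) :
    ∃ ψ : α → ℕ, (∀ x ∈ V, ψ x = φ x) ∧ Set.InjOn ψ ↑(V ∪ P) ∧ P.image ψ = Q := by
  let e := Finset.equivOfCardEq hc
  let ψ : α → ℕ := fun x => if h : x ∈ P then (e ⟨x, h⟩ : ℕ) else φ x
  have hV : ∀ x ∈ V, ψ x = φ x := by
    intro x hx
    have : x ∉ P := fun h => Finset.disjoint_left.1 hPV h hx
    simp [ψ, this]
  have hP : ∀ x (h : x ∈ P), ψ x = (e ⟨x, h⟩ : ℕ) := by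
    intro x h
    simp [ψ, h]
  have hPQ : ∀ x ∈ P, ψ x ∈ Q := by
    intro x h
    rw [hP x h]
    exact (e ⟨x, h⟩).2
  refine ⟨ψ, hV, ?_, ?_⟩
  · intro x hx y hy hxy
    rw [Finset.mem_coe, Finset.mem_union] at hx hy
    rcases hx with hx | hx <;> rcases hy with hy | hy
    · rw [hV x hx, hV y hy] at hxy
      exact hφ hx hy hxy
    · exfalso
      refine Finset.disjoint_left.1 hQ (Finset.mem_image_of_mem φ hx) ?_
      rw [← hV x hx, hxy]
      exact hPQ y hy
    · exfalso
      refine Finset.disjoint_left.1 hQ (Finset.mem_image_of_mem φ hy) ?_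
      rw [← hV y hy, ← hxy]
      exact hPQ x hx
    · rw [hP x hx, hP y hy] at hxy
      have := e.injective (Subtype.ext hxy)
      simpa using this
  · ext z
    rw [Finset.mem_image]
    constructor
    · rintro ⟨x, hx, rfl⟩
      exact hPQ x hx
    · intro hz
      refine ⟨e.symm ⟨z, hz⟩, (e.symm ⟨z, hz⟩).2, ?_⟩
      rw [hP _ (e.symm ⟨z, hz⟩).2]
      simp

lemma ext_edge {α : Type} [DecidableEq α] (φ : α → ℕ) (V E W : Finset α) (E' Z : Finset ℕ)
    (hφ : Set.InjOn φ ↑V) (hW : W ⊆ E) (hWV : Disjoint W V) (hZ : Z ⊆ E')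
    (hWZ : W.card = Z.card) (hE : E.card = E'.card) (hsub : (E ∩ V).image φ ⊆ E')
    (hZd : Disjoint Z ((E ∩ V).image φ))
    (hd : Disjoint (V.image φ) (E' \ (E ∩ V).image φ)) :
    ∃ ψ : α → ℕ, (∀ x ∈ V, ψ x = φ x) ∧ Set.InjOn ψ ↑(V ∪ E) ∧ E.image ψ = E' ∧
      W.image ψ = Z := by
  have hZ' : Disjoint (V.image φ) Z := by
    refine hd.mono_right ?_
    intro z hz
    rw [Finset.mem_sdiff]
    exact ⟨hZ hz, Finset.disjoint_left.1 hZd hz⟩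
  obtain ⟨φ1, h1, h2, h3⟩ := ext1 φ V W Z hφ hWV hWZ hZ'
  have hEV : (E ∩ V).image φ1 = (E ∩ V).image φ :=
    Finset.image_congr (fun x hx => h1 x (Finset.mem_inter.1 hx).2)
  have hV1 : V.image φ1 = V.image φ := Finset.image_congr (fun x hx => h1 x hx)
  have hcardA : ((E ∩ V).image φ).card = (E ∩ V).card :=
    Finset.card_image_of_injOn (hφ.mono (by simp))
  obtain ⟨ψ, g1, g2, g3⟩ := ext1 φ1 (V ∪ W) (E \ (V ∪ W)) (E' \ ((E ∩ V).image φ ∪ Z)) h2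
    Finset.sdiff_disjoint
    (by
      have e1 : E \ (V ∪ W) = E \ ((E ∩ V) ∪ W) := by
        ext x; simp only [Finset.mem_sdiff, Finset.mem_union, Finset.mem_inter]; tauto
      have e2 : (E ∩ V) ∪ W ⊆ E := Finset.union_subset Finset.inter_subset_left hW
      have e3 : Disjoint (E ∩ V) W := (hWV.mono_right Finset.inter_subset_right).symm
      rw [e1, Finset.card_sdiff_of_subset e2, Finset.card_sdiff_of_subset
        (Finset.union_subset hsub hZ), Finset.card_union_of_disjoint e3,
        Finset.card_union_of_disjoint hZd.symm, hcardA, hWZ, hE])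
    (by
      rw [Finset.image_union, h3, hV1, Finset.disjoint_union_left]
      constructor
      · exact hd.mono_right (Finset.sdiff_subset_sdiff (Finset.Subset.refl _)
          Finset.subset_union_left)
      · rw [Finset.disjoint_right]
        intro z hz hz'
        rw [Finset.mem_sdiff, Finset.mem_union] at hz
        exact hz.2 (Or.inr hz'))
  have hW2 : W.image ψ = Z := by
    rw [← h3]
    exact Finset.image_congr (fun x hx => g1 x (Finset.mem_union_right _ hx))
  refine ⟨ψ, ?_, ?_, ?_, hW2⟩
  · intro x hx
    rw [g1 x (Finset.mem_union_left _ hx), h1 x hx]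
  · refine g2.mono ?_
    rw [Finset.coe_subset]
    intro x hx
    simp only [Finset.mem_union, Finset.mem_sdiff] at hx ⊢
    tauto
  · have hdec : E = ((E ∩ V) ∪ W) ∪ (E \ (V ∪ W)) := by
      ext x
      have := @hW x
      simp only [Finset.mem_union, Finset.mem_sdiff, Finset.mem_inter]
      tauto
    have hA2 : (E ∩ V).image ψ = (E ∩ V).image φ := by
      rw [← hEV]
      exact Finset.image_congr (fun x hx =>
        g1 x (Finset.mem_union_left _ (Finset.mem_inter.1 hx).2))
    rw [hdec, Finset.image_union, Finset.image_union, g3, hW2, hA2]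
    exact Finset.union_sdiff_of_subset (Finset.union_subset hsub hZ)

lemma vertexSet_single {α : Type} [DecidableEq α] (E : Finset α) :
    vertexSet ({E} : Finset (Finset α)) = E := by
  simp [vertexSet]

lemma vertexSet_insert {α : Type} [DecidableEq α] (E : Finset α) (H : Finset (Finset α)) :
    vertexSet (insert E H) = vertexSet H ∪ E := by
  simp [vertexSet, Finset.union_comm]

lemma mem_vertexSet {α : Type} [DecidableEq α] (H : Finset (Finset α)) (v : α) :
    v ∈ vertexSet H ↔ ∃ F ∈ H, v ∈ F := by
  simp [vertexSet, Finset.mem_sup]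

lemma subset_vertexSet {α : Type} [DecidableEq α] {H : Finset (Finset α)} {F : Finset α}
    (hF : F ∈ H) : F ⊆ vertexSet H := fun v hv => (mem_vertexSet H v).2 ⟨F, hF, hv⟩

lemma vertexSet_mono {α : Type} [DecidableEq α] {H G : Finset (Finset α)} (h : H ⊆ G) :
    vertexSet H ⊆ vertexSet G := by
  intro v hv
  rw [mem_vertexSet] at hv ⊢
  obtain ⟨F, hF, hv⟩ := hv
  exact ⟨F, h hF, hv⟩

lemma image_vertexSet_subset {α : Type} [DecidableEq α] {H : Finset (Finset α)} {φ : α → ℕ}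
    {n : ℕ} (h : ∀ F ∈ H, F.image φ ⊆ vtx n) : (vertexSet H).image φ ⊆ vtx n := by
  intro x hx
  rw [Finset.mem_image] at hx
  obtain ⟨v, hv, rfl⟩ := hx
  obtain ⟨F, hF, hv⟩ := (mem_vertexSet H v).1 hv
  exact h F hF (Finset.mem_image_of_mem _ hv)

lemma vdeg_of_two {α : Type} [DecidableEq α] {H : Finset (Finset α)} {E F : Finset α}
    (hE : E ∈ H) (hF : F ∈ H) (hne : E ≠ F) {w : α} (h1 : w ∈ E) (h2 : w ∈ F) :
    vdeg H w ≠ 1 := by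
  have : 1 < vdeg H w := by
    unfold vdeg
    rw [Finset.one_lt_card]
    exact ⟨E, by simp [hE, h1], F, by simp [hF, h2], hne⟩
  omega

lemma embedA {α : Type} [DecidableEq α] (k ℓ n m q : ℕ) (hk : 2 ≤ k)
    (H : Finset (Finset α)) (hcard : ∀ E ∈ H, E.card = k) (h2 : TwoContractible H)
    (hov : Overlapping ℓ H) (hm : (vertexSet H).card ≤ m)
    (B : Finset ℕ → Finset ℕ) (Y : Finset (Finset ℕ)) (hY : Y.Nonempty)
    (hYE : ∀ E ∈ Y, E ⊆ vtx n ∧ E.card = k ∧ B E ⊆ E ∧ (B E).card = k - 2)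
    (hrich : RichF B ℓ (okT n m q ∅) Y)
    (H' : Finset (Finset α)) (hH' : IsHypertree H') :
    H' ⊆ H → ∃ φ : α → ℕ, Set.InjOn φ ↑(vertexSet H') ∧
      ∀ F ∈ H', F.image φ ∈ Y ∧ ∀ w ∈ F, vdeg H w ≠ 1 → φ w ∈ B (F.image φ) := by
  have step : ∀ (φ : α → ℕ) (V E : Finset α) (E' : Finset ℕ), E ∈ H → E' ∈ Y →
      Set.InjOn φ ↑V → (∀ w ∈ E ∩ V, vdeg H w ≠ 1) → (E ∩ V).image φ ⊆ B E' →
      Disjoint (V.image φ) (E' \ (E ∩ V).image φ) →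
      ∃ ψ : α → ℕ, (∀ x ∈ V, ψ x = φ x) ∧ Set.InjOn ψ ↑(V ∪ E) ∧ E.image ψ = E' ∧
        ∀ w ∈ E, vdeg H w ≠ 1 → ψ w ∈ B E' := by
    intro φ V E E' hE hE' hφ hdeg hsub hd
    obtain ⟨h1, h3, h4, h5⟩ := hYE E' hE'
    obtain ⟨W, hW, hWc⟩ := Finset.exists_subset_card_eq (h2 E hE)
    have hWm : ∀ w ∈ W, w ∈ E ∧ vdeg H w = 1 := fun w hw => by
      simpa using hW hw
    obtain ⟨ψ, g1, g2, g3, g4⟩ := ext_edge φ V E W E' (E' \ B E') hφ (fun w hw => (hWm w hw).1)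
      (by
        rw [Finset.disjoint_left]
        intro w hw hwV
        exact hdeg w (Finset.mem_inter.2 ⟨(hWm w hw).1, hwV⟩) (hWm w hw).2)
      Finset.sdiff_subset
      (by rw [Finset.card_sdiff_of_subset h4, h3, h5, hWc]; omega)
      (by rw [hcard E hE, h3]) (hsub.trans h4)
      (by
        rw [Finset.disjoint_left]
        intro z hz hz'
        exact (Finset.mem_sdiff.1 hz).2 (hsub hz'))
      hd
    refine ⟨ψ, g1, g2, g3, ?_⟩
    intro w hw hdw
    by_contra hcon
    have : ψ w ∈ E' \ B E' := by
      rw [Finset.mem_sdiff]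
      refine ⟨?_, hcon⟩
      rw [← g3]
      exact Finset.mem_image_of_mem _ hw
    rw [← g4, Finset.mem_image] at this
    obtain ⟨w', hw', heq⟩ := this
    have hww : w' = w := g2 (by simp [(hWm w' hw').1]) (by simp [hw]) heq
    subst hww
    exact hdw (hWm w' hw').2
  induction hH' with
  | single E =>
    intro hsub
    obtain ⟨E', hE'⟩ := hY
    obtain ⟨ψ, -, g2, g3, g4⟩ := step (fun _ => 0) ∅ E E' (hsub (by simp)) hE' (by simp) (by simp)
      (by simp) (by simp)
    refine ⟨ψ, by simpa [vertexSet_single] using g2, ?_⟩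
    intro F hF
    rw [Finset.mem_singleton] at hF
    subst hF
    rw [g3]
    exact ⟨hE', g4⟩
  | @grow H1 E F hH1 hE hF hint ih =>
    intro hsub
    have hH1 : H1 ⊆ H := (Finset.subset_insert _ _).trans hsub
    obtain ⟨φ, hinj, hφ⟩ := ih hH1
    have hEH : E ∈ H := hsub (Finset.mem_insert_self _ _)
    have hne : E ≠ F := by rintro rfl; exact hE hF
    have hdeg : ∀ w ∈ E ∩ vertexSet H1, vdeg H w ≠ 1 := by
      intro w hw
      rw [hint, Finset.mem_inter] at hw
      exact vdeg_of_two hEH (hH1 hF) hne hw.1 hw.2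
    have hQ : (E ∩ vertexSet H1).image φ ⊆ B (F.image φ) := by
      intro x hx
      rw [Finset.mem_image] at hx
      obtain ⟨w, hw, rfl⟩ := hx
      refine (hφ F hF).2 w ?_ (hdeg w hw)
      rw [hint] at hw
      exact (Finset.mem_inter.1 hw).2
    obtain ⟨E', hE', hQE, hdis⟩ := hrich (F.image φ) (hφ F hF).1 _ hQ
      (Finset.card_image_le.trans (by rw [hint]; exact hov E hEH F (hH1 hF) hne))
      ((vertexSet H1).image φ)
      ⟨image_vertexSet_subset fun F hF => (hYE _ (hφ F hF).1).1,
        Finset.card_image_le.trans ((Finset.card_le_card (vertexSet_mono hH1)).trans hm), by simp⟩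
    obtain ⟨ψ, g1, g2, g3, g4⟩ := step φ _ E E' hEH hE' hinj hdeg hQE hdis
    refine ⟨ψ, by rw [vertexSet_insert]; exact g2, ?_⟩
    intro F' hF'
    rw [Finset.mem_insert] at hF'
    rcases hF' with rfl | hF'
    · rw [g3]; exact ⟨hE', g4⟩
    · have hc : ∀ x ∈ F', ψ x = φ x := fun x hx => g1 x (subset_vertexSet hF' hx)
      have : F'.image ψ = F'.image φ := Finset.image_congr (fun x hx => hc x hx)
      rw [this]
      refine ⟨(hφ F' hF').1, ?_⟩
      intro w hw hdw
      rw [hc w hw]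
      exact (hφ F' hF').2 w hw hdw

lemma embedB {α : Type} [DecidableEq α] (k ℓ n m q : ℕ)
    (H : Finset (Finset α)) (hcard : ∀ E ∈ H, E.card = k)
    (hov : Overlapping ℓ H) (hm : (vertexSet H).card ≤ m)
    (S : Finset α) (hS : IsCrosscut H S) (hSq : S.card ≤ q + 1) (L : Finset ℕ)
    (Y : Finset (Finset ℕ)) (hY : Y.Nonempty)
    (hYE : ∀ E ∈ Y, E ⊆ vtx n ∧ E.card = k ∧ (E ∩ L).card = 1)
    (hrich : RichF id ℓ (okT n m q L) Y)
    (H' : Finset (Finset α)) (hH' : IsHypertree H') :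
    H' ⊆ H → ∃ φ : α → ℕ, Set.InjOn φ ↑(vertexSet H') ∧
      (∀ w ∈ vertexSet H', φ w ∈ L ↔ w ∈ S) ∧ ∀ F ∈ H', F.image φ ∈ Y := by
  have step : ∀ (φ : α → ℕ) (V E : Finset α) (E' : Finset ℕ), E ∈ H → E' ∈ Y →
      Set.InjOn φ ↑V → (∀ w ∈ V, φ w ∈ L ↔ w ∈ S) → (E ∩ V).image φ ⊆ E' →
      Disjoint (V.image φ) (E' \ (E ∩ V).image φ) →
      ∃ ψ : α → ℕ, (∀ x ∈ V, ψ x = φ x) ∧ Set.InjOn ψ ↑(V ∪ E) ∧ E.image ψ = E' ∧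
        ∀ w ∈ V ∪ E, ψ w ∈ L ↔ w ∈ S := by
    intro φ V E E' hE hE' hφ hL hsub hd
    obtain ⟨h1, h3, h4⟩ := hYE E' hE'
    obtain ⟨s, hs⟩ := Finset.card_eq_one.1 (hS E hE)
    obtain ⟨v, hv⟩ := Finset.card_eq_one.1 h4
    have hsE : s ∈ E ∧ s ∈ S := by
      rw [← Finset.mem_inter, hs]; simp
    have hS' : ∀ w ∈ E, w ∈ S ↔ w = s := by
      intro w hw
      have : w ∈ E ∩ S ↔ w = s := by rw [hs]; simp
      rw [← this, Finset.mem_inter]; tauto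
    have hL' : ∀ x ∈ E', x ∈ L ↔ x = v := by
      intro w hw
      have : w ∈ E' ∩ L ↔ w = v := by rw [hv]; simp
      rw [← this, Finset.mem_inter]; tauto
    have fin : ∀ ψ : α → ℕ, (∀ x ∈ V, ψ x = φ x) → Set.InjOn ψ ↑(V ∪ E) → E.image ψ = E' →
        ψ s ∈ L → ∀ w ∈ V ∪ E, ψ w ∈ L ↔ w ∈ S := by
      intro ψ g1 g2 g3 g4 w hw
      rw [Finset.mem_union] at hw
      rcases hw with hw | hw
      · rw [g1 w hw]; exact hL w hw
      · have m1 : ψ w ∈ E' := by rw [← g3]; exact Finset.mem_image_of_mem _ hw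
        have m2 : ψ s ∈ E' := by rw [← g3]; exact Finset.mem_image_of_mem _ hsE.1
        rw [hS' w hw, hL' _ m1, ← (hL' _ m2).1 g4]
        constructor
        · intro h
          exact g2 (by simp [hw]) (by simp [hsE.1]) h
        · rintro rfl; rfl
    by_cases hsV : s ∈ V
    · obtain ⟨ψ, g1, g2, g3, g4⟩ := ext_edge φ V E ∅ E' ∅ hφ (by simp) (by simp) (by simp)
        (by simp) (by rw [hcard E hE, h3]) hsub (by simp) hd
      refine ⟨ψ, g1, g2, g3, fin ψ g1 g2 g3 ?_⟩
      rw [g1 s hsV, hL s hsV]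
      exact hsE.2
    · have hvm : v ∈ E' ∧ v ∈ L := by
        rw [← Finset.mem_inter, hv]; simp
      obtain ⟨ψ, g1, g2, g3, g4⟩ := ext_edge φ V E {s} E' {v} hφ (by simp [hsE.1])
        (by simpa using hsV) (by simp [hvm.1])
        (by simp) (by rw [hcard E hE, h3]) hsub
        (by
          rw [Finset.disjoint_singleton_left, Finset.mem_image]
          rintro ⟨w, hw, hwv⟩
          rw [Finset.mem_inter] at hw
          have : w ∈ S := by rw [← hL w hw.2, hwv]; exact hvm.2
          rw [hS' w hw.1] at this
          subst this
          exact hsV hw.2) hd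
      refine ⟨ψ, g1, g2, g3, fin ψ g1 g2 g3 ?_⟩
      have : ψ s = v := by simpa using g4
      rw [this]; exact hvm.2
  induction hH' with
  | single E =>
    intro hsub
    obtain ⟨E', hE'⟩ := hY
    obtain ⟨ψ, -, g2, g3, g4⟩ := step (fun _ => 0) ∅ E E' (hsub (by simp)) hE' (by simp) (by simp)
      (by simp) (by simp)
    rw [Finset.empty_union] at g2 g4
    rw [vertexSet_single]
    refine ⟨ψ, g2, g4, ?_⟩
    intro F hF
    rw [Finset.mem_singleton] at hF
    subst hF
    rw [g3]
    exact hE'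
  | @grow H1 E F hH1 hE hF hint ih =>
    intro hsub
    have hH1 : H1 ⊆ H := (Finset.subset_insert _ _).trans hsub
    obtain ⟨φ, hinj, hL, hφ⟩ := ih hH1
    have hEH : E ∈ H := hsub (Finset.mem_insert_self _ _)
    have hne : E ≠ F := by rintro rfl; exact hE hF
    have hQ : (E ∩ vertexSet H1).image φ ⊆ F.image φ := by
      rw [hint]
      exact Finset.image_subset_image Finset.inter_subset_right
    have hQc : ((E ∩ vertexSet H1).image φ).card ≤ ℓ :=
      Finset.card_image_le.trans (by rw [hint]; exact hov E hEH F (hH1 hF) hne)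
    have hVv : (vertexSet H1).image φ ⊆ vtx n :=
      image_vertexSet_subset fun F hF => (hYE _ (hφ F hF)).1
    have hVm : ((vertexSet H1).image φ).card ≤ m :=
      Finset.card_image_le.trans ((Finset.card_le_card (vertexSet_mono hH1)).trans hm)
    obtain ⟨s, hs⟩ := Finset.card_eq_one.1 (hS E hEH)
    have hsE : s ∈ E ∧ s ∈ S := by
      rw [← Finset.mem_inter, hs]; simp
    have hex : ∃ E' ∈ Y, (E ∩ vertexSet H1).image φ ⊆ E' ∧
        Disjoint ((vertexSet H1).image φ) (E' \ (E ∩ vertexSet H1).image φ) := by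
      by_cases hsV : s ∈ vertexSet H1
      · obtain ⟨E', hE', hQE, hdis⟩ := hrich (F.image φ) (hφ F hF) _ hQ hQc
          ((vertexSet H1).image φ \ L)
          ⟨Finset.sdiff_subset.trans hVv, (Finset.card_le_card Finset.sdiff_subset).trans hVm,
            by simp⟩
        refine ⟨E', hE', hQE, ?_⟩
        rw [Finset.disjoint_left]
        intro x hx hx'
        by_cases hxL : x ∈ L
        · obtain ⟨v, hv⟩ := Finset.card_eq_one.1 (hYE E' hE').2.2
          have hL' : ∀ x ∈ E', x ∈ L → x = v := by
            intro w hw hwL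
            have : w ∈ E' ∩ L := Finset.mem_inter.2 ⟨hw, hwL⟩
            rw [hv] at this
            simpa using this
          rw [Finset.mem_sdiff] at hx'
          have hsQ : φ s ∈ (E ∩ vertexSet H1).image φ :=
            Finset.mem_image_of_mem _ (Finset.mem_inter.2 ⟨hsE.1, hsV⟩)
          have e1 := hL' x hx'.1 hxL
          have e2 := hL' (φ s) (hQE hsQ) ((hL s hsV).2 hsE.2)
          rw [e1, ← e2] at hx'
          exact hx'.2 hsQ
        · exact Finset.disjoint_left.1 hdis (Finset.mem_sdiff.2 ⟨hx, hxL⟩) hx'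
      · refine hrich (F.image φ) (hφ F hF) _ hQ hQc ((vertexSet H1).image φ) ⟨hVv, hVm, ?_⟩
        have : (vertexSet H1).image φ ∩ L ⊆ (S.erase s).image φ := by
          intro x hx
          rw [Finset.mem_inter, Finset.mem_image] at hx
          obtain ⟨⟨w, hw, rfl⟩, hwL⟩ := hx
          refine Finset.mem_image_of_mem _ (Finset.mem_erase.2 ⟨?_, (hL w hw).1 hwL⟩)
          rintro rfl
          exact hsV hw
        have h1 := (Finset.card_le_card this).trans Finset.card_image_le
        rw [Finset.card_erase_of_mem hsE.2] at h1
        omega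
    obtain ⟨E', hE', hQE, hdis⟩ := hex
    obtain ⟨ψ, g1, g2, g3, g4⟩ := step φ _ E E' hEH hE' hinj hL hQE hdis
    rw [vertexSet_insert]
    refine ⟨ψ, g2, g4, ?_⟩
    intro F' hF'
    rw [Finset.mem_insert] at hF'
    rcases hF' with rfl | hF'
    · rw [g3]; exact hE'
    · have : F'.image ψ = F'.image φ :=
        Finset.image_congr (fun x hx => g1 x (subset_vertexSet hF' hx))
      rw [this]
      exact hφ F' hF'


/-! ### Container families -/

/-- The bound on the number of containers in one step. -/
def bd (n m ℓ : ℕ) : ℕ := ((n + 1) ^ (m + ℓ)) ^ ((n + 1) ^ ℓ)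

/-- `𝒞` is a family of containers for `H`-free subgraphs of `G`. -/
def Cov {α : Type} [DecidableEq α] (H : Finset (Finset α)) (G : Finset (Finset ℕ))
    (𝒞 : Finset (Finset (Finset ℕ))) (b : ℕ) : Prop :=
  (∀ C ∈ 𝒞, C ⊆ G) ∧ 𝒞.card ≤ b ∧ ∀ I ⊆ G, HFree H I → ∃ C ∈ 𝒞, I ⊆ C

lemma HFree.mono {α : Type} [DecidableEq α] {H : Finset (Finset α)} {I J : Finset (Finset ℕ)}
    (h : HFree H I) (hJ : J ⊆ I) : HFree H J := fun K hK => h K (hK.trans hJ)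

lemma HFree.not_embed {α : Type} [DecidableEq α] {H : Finset (Finset α)}
    {I : Finset (Finset ℕ)} (h : HFree H I) (φ : α → ℕ)
    (hφ : Set.InjOn φ ↑(vertexSet H)) (hF : ∀ F ∈ H, F.image φ ∈ I) : False := by
  refine h (H.image fun E => E.image φ) ?_ ⟨φ, hφ, rfl⟩
  intro E hE
  rw [Finset.mem_image] at hE
  obtain ⟨F, hFH, rfl⟩ := hE
  exact hF F hFH

lemma contA {α : Type} [DecidableEq α] (k ℓ n m : ℕ) (hk : 2 ≤ k)
    (H : Finset (Finset α)) (hH : IsKTree k H) (h2 : TwoContractible H)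
    (hov : Overlapping ℓ H) (hm : (vertexSet H).card ≤ m)
    (B : Finset ℕ → Finset ℕ) (X : Finset (Finset ℕ)) (hX : IsKGraphOn k n X)
    (hB : ∀ E ∈ X, B E ⊆ E ∧ (B E).card = k - 2) :
    ∃ 𝒞, Cov H X 𝒞 (bd n m ℓ) ∧ ∀ C ∈ 𝒞, ∃ T : Finset ℕ → Finset ℕ, (∀ Q, (T Q).card ≤ m) ∧
      ∀ E ∈ C, ∃ Q ⊆ B E, ∃ y ∈ E, y ∉ Q ∧ y ∈ T Q := by
  obtain ⟨𝒞, h1, h3, h4⟩ := generic_containers n ℓ m 0 ∅ B X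
    (fun E hE => (hB E hE).1.trans (hX E hE).1)
  refine ⟨𝒞, ⟨fun C hC => (h3 C hC).1, h1, ?_⟩, ?_⟩
  · intro I hI hfree
    refine h4 I hI ?_
    intro Y hY hne hrich
    obtain ⟨φ, g1, g2⟩ := embedA k ℓ n m 0 hk H hH.2 h2 hov hm B Y hne
      (fun E hE => ⟨(hX E (hI (hY hE))).1, (hX E (hI (hY hE))).2, (hB E (hI (hY hE))).1,
        (hB E (hI (hY hE))).2⟩) hrich H hH.1 (Finset.Subset.refl _)
    exact hfree.not_embed φ g1 fun F hF => hY (g2 F hF).1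
  · intro C hC
    obtain ⟨-, T, r, hT, hE⟩ := h3 C hC
    refine ⟨T, fun Q => (hT Q).2.1, ?_⟩
    intro E hEC
    obtain ⟨Q, hQ, -, hd, -⟩ := hE E hEC
    rw [Finset.not_disjoint_iff] at hd
    obtain ⟨y, hy1, hy2⟩ := hd
    rw [Finset.mem_sdiff] at hy2
    exact ⟨Q, hQ, y, hy2.1, hy2.2, hy1⟩

lemma contB {α : Type} [DecidableEq α] (k ℓ n m q : ℕ)
    (H : Finset (Finset α)) (hH : IsKTree k H)
    (hov : Overlapping ℓ H) (hm : (vertexSet H).card ≤ m)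
    (S : Finset α) (hS : IsCrosscut H S) (hSq : S.card ≤ q + 1) (L : Finset ℕ)
    (X : Finset (Finset ℕ)) (hX : IsKGraphOn k n X) (hL : ∀ E ∈ X, (E ∩ L).card = 1) :
    ∃ 𝒞, Cov H X 𝒞 (bd n m ℓ) ∧ ∀ C ∈ 𝒞, ∃ (T : Finset ℕ → Finset ℕ) (r : Finset ℕ → ℕ),
      (∀ Q, (T Q).card ≤ m) ∧ (∀ Q, (T Q ∩ L).card ≤ q) ∧ ∀ E ∈ C, Caught id ℓ T r E := by
  obtain ⟨𝒞, h1, h3, h4⟩ := generic_containers n ℓ m q L id X (fun E hE => (hX E hE).1)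
  refine ⟨𝒞, ⟨fun C hC => (h3 C hC).1, h1, ?_⟩, ?_⟩
  · intro I hI hfree
    refine h4 I hI ?_
    intro Y hY hne hrich
    obtain ⟨φ, g1, -, g2⟩ := embedB k ℓ n m q H hH.2 hov hm S hS hSq L Y hne
      (fun E hE => ⟨(hX E (hI (hY hE))).1, (hX E (hI (hY hE))).2, hL E (hI (hY hE))⟩)
      hrich H hH.1 (Finset.Subset.refl _)
    exact hfree.not_embed φ g1 fun F hF => hY (g2 F hF)
  · intro C hC
    obtain ⟨-, T, r, hT, hE⟩ := h3 C hC
    exact ⟨T, r, fun Q => (hT Q).2.1, fun Q => (hT Q).2.2, hE⟩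

lemma lift_cov {α : Type} [DecidableEq α] {H : Finset (Finset α)} {G X : Finset (Finset ℕ)}
    {𝒞 : Finset (Finset (Finset ℕ))} {b : ℕ} (hX : X ⊆ G) (h : Cov H X 𝒞 b) :
    ∃ 𝒞', Cov H G 𝒞' b ∧ ∀ C ∈ 𝒞', ∃ C' ∈ 𝒞, C.card + X.card = G.card + C'.card := by
  obtain ⟨h1, h2, h3⟩ := h
  refine ⟨𝒞.image fun C => (G \ X) ∪ C, ⟨?_, Finset.card_image_le.trans h2, ?_⟩, ?_⟩
  · intro C hC
    rw [Finset.mem_image] at hC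
    obtain ⟨C', hC', rfl⟩ := hC
    exact Finset.union_subset Finset.sdiff_subset ((h1 C' hC').trans hX)
  · intro I hI hf
    obtain ⟨C, hC, hIC⟩ := h3 (I ∩ X) Finset.inter_subset_right (hf.mono Finset.inter_subset_left)
    refine ⟨_, Finset.mem_image.2 ⟨C, hC, rfl⟩, ?_⟩
    intro E hE
    rw [Finset.mem_union, Finset.mem_sdiff]
    by_cases hEX : E ∈ X
    · exact Or.inr (hIC (Finset.mem_inter.2 ⟨hE, hEX⟩))
    · exact Or.inl ⟨hI hE, hEX⟩
  · intro C hC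
    rw [Finset.mem_image] at hC
    obtain ⟨C', hC', rfl⟩ := hC
    refine ⟨C', hC', ?_⟩
    have hd : Disjoint (G \ X) C' := by
      rw [Finset.disjoint_left]
      intro E hE hE'
      exact (Finset.mem_sdiff.1 hE).2 (h1 C' hC' hE')
    rw [Finset.card_union_of_disjoint hd]
    have := Finset.card_sdiff_add_card_eq_card hX
    omega

/-! ### Counting -/

lemma count_pairs (𝒵 : Finset (Finset ℕ)) (k m : ℕ) (T : Finset ℕ → Finset ℕ)
    (hT : ∀ Q, (T Q).card ≤ m) (h𝒵 : ∀ Z ∈ 𝒵, Z.card ≤ k) (W : Finset (Finset ℕ × ℕ))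
    (hW : ∀ p ∈ W, p.1 ∈ 𝒵 ∧ ∃ Q ⊆ p.1, p.2 ∈ T Q) : W.card ≤ 𝒵.card * (2 ^ k * m) := by
  have hsub : W ⊆ 𝒵.biUnion fun Z => Z.powerset.biUnion fun Q =>
      (T Q).image (fun y => (Z, y)) := by
    intro p hp
    obtain ⟨h1, Q, hQ, hy⟩ := hW p hp
    simp only [Finset.mem_biUnion, Finset.mem_powerset, Finset.mem_image]
    exact ⟨p.1, h1, Q, hQ, p.2, hy, rfl⟩
  refine (Finset.card_le_card hsub).trans (Finset.card_biUnion_le_card_mul _ _ _ ?_)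
  intro Z hZ
  calc _ ≤ Z.powerset.card * m := Finset.card_biUnion_le_card_mul _ _ _
        (fun Q _ => Finset.card_image_le.trans (hT Q))
    _ ≤ _ := by
        rw [Finset.card_powerset]
        exact Nat.mul_le_mul_right _ (Nat.pow_le_pow_right (by norm_num) (h𝒵 Z hZ))

lemma shrink0 {α : Type} [DecidableEq α] (k ℓ n m : ℕ) (hk : 2 ≤ k)
    (H : Finset (Finset α)) (hH : IsKTree k H) (h2 : TwoContractible H)
    (hov : Overlapping ℓ H) (hm : (vertexSet H).card ≤ m)
    (G X 𝒵 : Finset (Finset ℕ)) (hG : IsKGraphOn k n G) (hXG : X ⊆ G)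
    (hZk : ∀ Z ∈ 𝒵, Z.card ≤ k)
    (hX : ∀ E ∈ X, ∀ y ∈ E, E.erase y ∈ 𝒵) :
    ∃ 𝒞, Cov H G 𝒞 (bd n m ℓ) ∧ ∀ C ∈ 𝒞, C.card + X.card ≤ G.card + 𝒵.card * (2 ^ k * m) := by
  have hB : ∀ E : Finset ℕ, ∃ B : Finset ℕ, E ∈ X → B ⊆ E ∧ B.card = k - 2 := by
    intro E
    by_cases hE : E ∈ X
    · obtain ⟨B, h1, h3⟩ := Finset.exists_subset_card_eq
        (show k - 2 ≤ E.card by rw [(hG E (hXG hE)).2]; omega)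
      exact ⟨B, fun _ => ⟨h1, h3⟩⟩
    · exact ⟨∅, fun h => absurd h hE⟩
  choose B hB using hB
  obtain ⟨𝒞, hcov, hC⟩ := contA k ℓ n m hk H hH h2 hov hm B X (fun E hE => hG E (hXG hE)) hB
  obtain ⟨𝒞', hcov', hC'⟩ := lift_cov hXG hcov
  refine ⟨𝒞', hcov', ?_⟩
  intro C hCC
  obtain ⟨C0, hC0, heq⟩ := hC' C hCC
  rw [heq]
  apply Nat.add_le_add_left
  obtain ⟨T, hT, hE⟩ := hC C0 hC0
  have hsub := hcov.1 C0 hC0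
  have : ∀ E : Finset ℕ, ∃ y, E ∈ C0 → y ∈ E ∧ ∃ Q ⊆ E.erase y, y ∈ T Q := by
    intro E
    by_cases hEC : E ∈ C0
    · obtain ⟨Q, hQ, y, hy, hyQ, hyT⟩ := hE E hEC
      refine ⟨y, fun _ => ⟨hy, Q, ?_, hyT⟩⟩
      intro x hx
      rw [Finset.mem_erase]
      refine ⟨?_, (hB E (hsub hEC)).1 (hQ hx)⟩
      rintro rfl
      exact hyQ hx
    · exact ⟨0, fun h => absurd h hEC⟩
  choose y hy using this
  have hinj : Set.InjOn (fun E : Finset ℕ => (E.erase (y E), y E)) ↑C0 := by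
    intro E hE E' hE' heq
    simp only [Prod.mk.injEq] at heq
    rw [← Finset.insert_erase (hy E hE).1, ← Finset.insert_erase (hy E' hE').1, heq.1, heq.2]
  rw [← Finset.card_image_of_injOn hinj]
  refine count_pairs 𝒵 k m T hT hZk _ ?_
  intro p hp
  rw [Finset.mem_image] at hp
  obtain ⟨E, hEC, rfl⟩ := hp
  exact ⟨hX E (hsub hEC) _ (hy E hEC).1, (hy E hEC).2⟩

lemma shrink2 {α : Type} [DecidableEq α] (k ℓ n m s : ℕ) (hk : 2 ≤ k)
    (H : Finset (Finset α)) (hH : IsKTree k H) (h2 : TwoContractible H)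
    (hov : Overlapping ℓ H) (hm : (vertexSet H).card ≤ m)
    (G X : Finset (Finset ℕ)) (hG : IsKGraphOn k n G) (hXG : X ⊆ G)
    (hX : ∀ E ∈ X, ∃ x ∈ E, ∃ x' ∈ E, x ≠ x' ∧ uDeg G (E.erase x) < s ∧
      uDeg G (E.erase x') < s) :
    ∃ 𝒞, Cov H G 𝒞 (bd n m ℓ) ∧
      ∀ C ∈ 𝒞, C.card + X.card ≤ G.card + s * (n.choose (k - 2) * (2 ^ k * m)) := by
  have hx : ∀ E : Finset ℕ, ∃ x x' : ℕ, E ∈ X → x ∈ E ∧ x' ∈ E ∧ x ≠ x' ∧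
      uDeg G (E.erase x) < s ∧ uDeg G (E.erase x') < s := by
    intro E
    by_cases hE : E ∈ X
    · obtain ⟨x, h1, x', h2, h3⟩ := hX E hE
      exact ⟨x, x', fun _ => ⟨h1, h2, h3⟩⟩
    · exact ⟨0, 0, fun h => absurd h hE⟩
  choose x x' hx using hx
  let B : Finset ℕ → Finset ℕ := fun E => (E.erase (x E)).erase (x' E)
  have hB : ∀ E ∈ X, B E ⊆ E ∧ (B E).card = k - 2 := by
    intro E hE
    obtain ⟨h1, h3, h4, -⟩ := hx E hE
    refine ⟨(Finset.erase_subset _ _).trans (Finset.erase_subset _ _), ?_⟩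
    rw [Finset.card_erase_of_mem (Finset.mem_erase.2 ⟨h4.symm, h3⟩),
      Finset.card_erase_of_mem h1, (hG E (hXG hE)).2]
    omega
  obtain ⟨𝒞, hcov, hC⟩ := contA k ℓ n m hk H hH h2 hov hm B X (fun E hE => hG E (hXG hE)) hB
  obtain ⟨𝒞', hcov', hC'⟩ := lift_cov hXG hcov
  refine ⟨𝒞', hcov', ?_⟩
  intro C hCC
  obtain ⟨C0, hC0, heq⟩ := hC' C hCC
  rw [heq]
  apply Nat.add_le_add_left
  obtain ⟨T, hT, hE⟩ := hC C0 hC0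
  have hsub := hcov.1 C0 hC0
  have : ∀ E : Finset ℕ, ∃ p : Finset ℕ × ℕ, E ∈ C0 → (p.1 ⊆ E ∧ p.1.card = k - 2) ∧
      (∃ Q ⊆ p.1, p.2 ∈ T Q) ∧ insert p.2 p.1 ⊆ E ∧ uDeg G (insert p.2 p.1) < s := by
    intro E
    by_cases hEC : E ∈ C0
    · obtain ⟨Q, hQ, y, hy, hyQ, hyT⟩ := hE E hEC
      obtain ⟨h1, h3, h4, h5, h6⟩ := hx E (hsub hEC)
      have hQE : ∀ z ∈ Q, z ≠ x E ∧ z ≠ x' E ∧ z ∈ E := by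
        intro z hz
        have := hQ hz
        simp only [B, Finset.mem_erase] at this
        tauto
      have main : ∀ w ∈ E, y ≠ w → (∀ z ∈ Q, z ≠ w) → uDeg G (E.erase w) < s →
          ∃ p : Finset ℕ × ℕ, E ∈ C0 → (p.1 ⊆ E ∧ p.1.card = k - 2) ∧
            (∃ Q ⊆ p.1, p.2 ∈ T Q) ∧ insert p.2 p.1 ⊆ E ∧ uDeg G (insert p.2 p.1) < s := by
        intro w hw hyw hQw hdw
        have hyE : y ∈ E.erase w := Finset.mem_erase.2 ⟨hyw, hy⟩
        refine ⟨((E.erase w).erase y, y), fun _ => ⟨⟨?_, ?_⟩, ⟨Q, ?_, hyT⟩, ?_, ?_⟩⟩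
        · exact (Finset.erase_subset _ _).trans (Finset.erase_subset _ _)
        · rw [Finset.card_erase_of_mem hyE, Finset.card_erase_of_mem hw,
            (hG E (hXG (hsub hEC))).2]
          omega
        · intro z hz
          simp only [Finset.mem_erase]
          refine ⟨?_, hQw z hz, (hQE z hz).2.2⟩
          rintro rfl
          exact hyQ hz
        · simp only [Finset.insert_erase hyE]
          exact Finset.erase_subset _ _
        · simpa only [Finset.insert_erase hyE] using hdw
      by_cases hyx : y = x E
      · exact main (x' E) h3 (by rw [hyx]; exact h4) (fun z hz => (hQE z hz).2.1) h6
      · exact main (x E) h1 hyx (fun z hz => (hQE z hz).1) h5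
    · exact ⟨(∅, 0), fun h => absurd h hEC⟩
  choose p hp using this
  have h1 : C0.card ≤ s * (C0.image p).card := by
    refine Finset.card_le_mul_card_image _ _ ?_
    intro b hb
    rw [Finset.mem_image] at hb
    obtain ⟨E, hEC, rfl⟩ := hb
    refine le_trans (Finset.card_le_card ?_) (hp E hEC).2.2.2.le
    intro E' hE'
    rw [Finset.mem_filter] at hE' ⊢
    refine ⟨hXG (hsub hE'.1), ?_⟩
    rw [← hE'.2]
    exact (hp E' hE'.1).2.2.1
  refine h1.trans (Nat.mul_le_mul_left _ ?_)
  have h3 : ((vtx n).powersetCard (k - 2)).card = n.choose (k - 2) := by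
    rw [Finset.card_powersetCard]
    simp [vtx]
  rw [← h3]
  refine count_pairs _ k m T hT ?_ _ ?_
  · intro Z hZ
    rw [Finset.mem_powersetCard] at hZ
    omega
  · intro b hb
    rw [Finset.mem_image] at hb
    obtain ⟨E, hEC, rfl⟩ := hb
    refine ⟨?_, (hp E hEC).2.1⟩
    rw [Finset.mem_powersetCard]
    exact ⟨(hp E hEC).1.1.trans (hG E (hXG (hsub hEC))).1, (hp E hEC).1.2⟩


lemma card_vtx (n : ℕ) : (vtx n).card = n := by simp [vtx]

lemma split_lemma (n a : ℕ) (𝒟 : Finset (Finset ℕ)) (c : Finset ℕ → Finset ℕ)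
    (h : ∀ D ∈ 𝒟, D ⊆ vtx n ∧ c D ⊆ vtx n ∧ Disjoint D (c D) ∧ D.card + (c D).card ≤ a) :
    ∃ L : Finset ℕ, 𝒟.card ≤ 2 ^ a * (𝒟.filter fun D => c D ⊆ L ∧ Disjoint D L).card := by
  by_contra hcon
  push Not at hcon
  have h1 : ∑ L ∈ (vtx n).powerset, 2 ^ a * (𝒟.filter fun D => c D ⊆ L ∧ Disjoint D L).card <
      ∑ L ∈ (vtx n).powerset, 𝒟.card :=
    Finset.sum_lt_sum_of_nonempty ⟨∅, by simp⟩ (fun L _ => hcon L)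
  rw [Finset.sum_const, Finset.card_powerset, card_vtx, smul_eq_mul, ← Finset.mul_sum] at h1
  have h2 : ∑ L ∈ (vtx n).powerset, (𝒟.filter fun D => c D ⊆ L ∧ Disjoint D L).card =
      ∑ D ∈ 𝒟, ((vtx n).powerset.filter fun L => c D ⊆ L ∧ Disjoint D L).card := by
    simp only [Finset.card_filter]
    exact Finset.sum_comm
  have h3 : ∀ D ∈ 𝒟, 2 ^ n ≤
      2 ^ a * ((vtx n).powerset.filter fun L => c D ⊆ L ∧ Disjoint D L).card := by
    intro D hD
    obtain ⟨d1, d2, d3, d4⟩ := h D hD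
    have e : ((vtx n).powerset.filter fun L => c D ⊆ L ∧ Disjoint D L) =
        Finset.Icc (c D) (vtx n \ D) := by
      ext L
      simp only [Finset.mem_filter, Finset.mem_powerset, Finset.mem_Icc,
        Finset.subset_sdiff]
      constructor
      · rintro ⟨q1, q2, q3⟩
        exact ⟨q2, q1, q3.symm⟩
      · rintro ⟨q2, q1, q3⟩
        exact ⟨q1, q2, q3.symm⟩
    have hcs : c D ⊆ vtx n \ D := Finset.subset_sdiff.2 ⟨d2, d3.symm⟩
    rw [e, Finset.card_Icc_finset hcs, Finset.card_sdiff_of_subset d1, card_vtx, ← pow_add]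
    exact Nat.pow_le_pow_right (by norm_num) (by omega)
  have h4 : 𝒟.card * 2 ^ n ≤
      ∑ D ∈ 𝒟, 2 ^ a * ((vtx n).powerset.filter fun L => c D ⊆ L ∧ Disjoint D L).card := by
    have := Finset.card_nsmul_le_sum 𝒟 _ _ h3
    simpa using this
  rw [← Finset.mul_sum, ← h2] at h4
  rw [mul_comm] at h4
  omega

lemma shrink1 {α : Type} [DecidableEq α] (k ℓ n m s σ : ℕ) (hk : 2 ≤ k)
    (H : Finset (Finset α)) (hH : IsKTree k H)
    (hov : Overlapping ℓ H) (hm : (vertexSet H).card ≤ m)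
    (S : Finset α) (hS : IsCrosscut H S) (hSσ : S.card = σ) (hσ : 1 ≤ σ)
    (G X 𝓗 : Finset (Finset ℕ)) (hG : IsKGraphOn k n G) (hXG : X ⊆ G)
    (hHk : ∀ Z ∈ 𝓗, Z.card ≤ k)
    (hX : ∀ E ∈ X, ∃ x ∈ E, uDeg G (E.erase x) < s ∧
      ∀ y ∈ E, y ≠ x → ¬ uDeg G (E.erase y) < s ∧ E.erase y ∈ 𝓗) :
    ∃ 𝒞 d, Cov H G 𝒞 (bd n m ℓ) ∧
      X.card ≤ (σ - 1) * n.choose (k - 1) + s * (2 ^ (k + σ) * d) ∧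
      ∀ C ∈ 𝒞, C.card + d ≤ G.card + 𝓗.card * (2 ^ k * m) := by
  let cen : Finset ℕ → Finset ℕ := fun D =>
    (vtx n \ D).filter fun v => insert v D ∈ X ∧ uDeg G D < s
  let P := (vtx n).powersetCard (k - 1)
  have hP : P.card = n.choose (k - 1) := by
    rw [Finset.card_powersetCard, card_vtx]
  let 𝒟0 := P.filter fun D => σ ≤ (cen D).card
  have hcen : ∀ D v, v ∈ cen D ↔ (v ∈ vtx n ∧ v ∉ D) ∧ insert v D ∈ X ∧ uDeg G D < s := by
    intro D v
    simp only [cen, Finset.mem_filter, Finset.mem_sdiff]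
  have hcard_cen : ∀ D, (cen D).card ≤ s := by
    intro D
    by_cases hD : uDeg G D < s
    · refine le_trans ?_ hD.le
      refine Finset.card_le_card_of_injOn (fun v => insert v D) ?_ ?_
      · intro v hv
        have hv' := (hcen D v).1 hv
        exact Finset.mem_coe.2 (Finset.mem_filter.2 ⟨hXG hv'.2.1, Finset.subset_insert _ _⟩)
      · intro v hv w hw hvw
        have hv' := (hcen D v).1 hv
        have hmem : v ∈ insert w D := by
          rw [← (show insert v D = insert w D from hvw)]
          exact Finset.mem_insert_self _ _
        rcases Finset.mem_insert.1 hmem with h | h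
        · exact h
        · exact absurd h hv'.1.2
    · have : cen D = ∅ := by
        rw [Finset.eq_empty_iff_forall_notMem]
        intro v hv
        exact hD ((hcen D v).1 hv).2.2
      simp [this]
  have hXle : X.card ≤ (σ - 1) * n.choose (k - 1) + s * 𝒟0.card := by
    have hsub : X ⊆ P.biUnion fun D => (cen D).image fun v => insert v D := by
      intro E hE
      obtain ⟨x, hx, hdx, -⟩ := hX E hE
      have hEG := hG E (hXG hE)
      rw [Finset.mem_biUnion]
      refine ⟨E.erase x, ?_, ?_⟩
      · rw [Finset.mem_powersetCard, Finset.card_erase_of_mem hx, hEG.2]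
        exact ⟨(Finset.erase_subset _ _).trans hEG.1, rfl⟩
      · rw [Finset.mem_image]
        refine ⟨x, ?_, Finset.insert_erase hx⟩
        rw [hcen, Finset.insert_erase hx]
        exact ⟨⟨hEG.1 hx, by simp⟩, hE, hdx⟩
    calc X.card ≤ _ := Finset.card_le_card hsub
      _ ≤ ∑ D ∈ P, ((cen D).image fun v => insert v D).card := Finset.card_biUnion_le
      _ ≤ ∑ D ∈ P, ((σ - 1) + if σ ≤ (cen D).card then s else 0) := by
          refine Finset.sum_le_sum fun D _ => Finset.card_image_le.trans ?_
          have := hcard_cen D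
          split_ifs <;> omega
      _ = _ := by
          rw [Finset.sum_add_distrib, Finset.sum_const, hP, ← Finset.sum_filter,
            Finset.sum_const, smul_eq_mul, smul_eq_mul, mul_comm, mul_comm s]
  have hc : ∀ D : Finset ℕ, ∃ c : Finset ℕ, D ∈ 𝒟0 → c ⊆ cen D ∧ c.card = σ := by
    intro D
    by_cases hD : D ∈ 𝒟0
    · obtain ⟨c, h1, h2⟩ := Finset.exists_subset_card_eq (Finset.mem_filter.1 hD).2
      exact ⟨c, fun _ => ⟨h1, h2⟩⟩
    · exact ⟨∅, fun h => absurd h hD⟩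
  choose c hc using hc
  have hD0 : ∀ D ∈ 𝒟0, D ⊆ vtx n ∧ D.card = k - 1 := by
    intro D hD
    exact Finset.mem_powersetCard.1 (Finset.mem_filter.1 hD).1
  obtain ⟨L, hL⟩ := split_lemma n (k + σ) 𝒟0 c (by
    intro D hD
    refine ⟨(hD0 D hD).1, ?_, ?_, ?_⟩
    · intro v hv
      exact ((hcen D v).1 ((hc D hD).1 hv)).1.1
    · rw [Finset.disjoint_right]
      intro v hv
      exact ((hcen D v).1 ((hc D hD).1 hv)).1.2
    · rw [(hD0 D hD).2, (hc D hD).2]; omega)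
  let 𝒟 := 𝒟0.filter fun D => c D ⊆ L ∧ Disjoint D L
  have hD1 : ∀ D ∈ 𝒟, D ∈ 𝒟0 ∧ c D ⊆ L ∧ Disjoint D L := fun D hD => Finset.mem_filter.1 hD
  have hcD : ∀ D ∈ 𝒟, ∀ v ∈ c D, v ∈ L ∧ v ∉ D ∧ insert v D ∈ X ∧ uDeg G D < s := by
    intro D hD v hv
    have h1 := (hcen D v).1 ((hc D (hD1 D hD).1).1 hv)
    exact ⟨(hD1 D hD).2.1 hv, h1.1.2, h1.2⟩
  have hsd : ∀ D ∈ 𝒟, ∀ v ∈ c D, (insert v D) \ L = D := by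
    intro D hD v hv
    rw [Finset.insert_sdiff_of_mem _ (hcD D hD v hv).1]
    exact Finset.sdiff_eq_self_of_disjoint (hD1 D hD).2.2
  let X1 := 𝒟.biUnion fun D => (c D).image fun v => insert v D
  have hX1 : ∀ E, E ∈ X1 ↔ ∃ D ∈ 𝒟, ∃ v ∈ c D, insert v D = E := by
    intro E
    simp only [X1, Finset.mem_biUnion, Finset.mem_image]
  have hX1X : X1 ⊆ X := by
    intro E hE
    obtain ⟨D, hD, v, hv, rfl⟩ := (hX1 E).1 hE
    exact (hcD D hD v hv).2.2.1
  obtain ⟨𝒞, hcov, hC⟩ := contB k ℓ n m (σ - 1) H hH hov hm S hS (by omega) L X1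
    (fun E hE => hG E (hXG (hX1X hE))) (by
      intro E hE
      obtain ⟨D, hD, v, hv, rfl⟩ := (hX1 E).1 hE
      rw [Finset.insert_inter_of_mem (hcD D hD v hv).1,
        Finset.disjoint_iff_inter_eq_empty.1 (hD1 D hD).2.2]
      simp)
  obtain ⟨𝒞', hcov', hC'⟩ := lift_cov (hX1X.trans hXG) hcov
  refine ⟨𝒞', 𝒟.card, hcov', hXle.trans (Nat.add_le_add_left (Nat.mul_le_mul_left _ hL) _), ?_⟩
  intro C hCC
  obtain ⟨C0, hC0, heq⟩ := hC' C hCC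
  obtain ⟨T, r, hT, hTL, hcaught⟩ := hC C0 hC0
  have hsub := hcov.1 C0 hC0
  let isBad : Finset ℕ → Prop := fun D => ∃ v ∈ c D, ∃ y ∈ D, ∃ Q ⊆ (insert v D).erase y, y ∈ T Q
  have hbad : (𝒟.filter isBad).card ≤ 𝓗.card * (2 ^ k * m) := by
    have : ∀ D : Finset ℕ, ∃ v y, isBad D → v ∈ c D ∧ y ∈ D ∧
        ∃ Q ⊆ (insert v D).erase y, y ∈ T Q := by
      intro D
      by_cases hb : isBad D
      · obtain ⟨v, hv, y, hy, h⟩ := hb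
        exact ⟨v, y, fun _ => ⟨hv, hy, h⟩⟩
      · exact ⟨0, 0, fun h => absurd h hb⟩
    choose v y hvy using this
    have hinj : Set.InjOn (fun D : Finset ℕ => ((insert (v D) D).erase (y D), y D))
        ↑(𝒟.filter isBad) := by
      intro D hD D' hD' h
      rw [Finset.mem_coe, Finset.mem_filter] at hD hD'
      simp only [Prod.mk.injEq] at h
      have e : insert (v D) D = insert (v D') D' := by
        rw [← Finset.insert_erase (Finset.mem_insert_of_mem (hvy D hD.2).2.1 :
            y D ∈ insert (v D) D),
          ← Finset.insert_erase (Finset.mem_insert_of_mem (hvy D' hD'.2).2.1 :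
            y D' ∈ insert (v D') D'), h.1, h.2]
      rw [← hsd D hD.1 _ (hvy D hD.2).1, e, hsd D' hD'.1 _ (hvy D' hD'.2).1]
    rw [← Finset.card_image_of_injOn hinj]
    refine count_pairs 𝓗 k m T hT hHk _ ?_
    intro p hp
    rw [Finset.mem_image] at hp
    obtain ⟨D, hD, rfl⟩ := hp
    rw [Finset.mem_filter] at hD
    obtain ⟨hv, hy, hQ⟩ := hvy D hD.2
    refine ⟨?_, hQ⟩
    obtain ⟨hvL, hvD, hE, hdeg⟩ := hcD D hD.1 _ hv
    obtain ⟨x, hx, hdx, hall⟩ := hX _ hE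
    have hvx : v D = x := by
      by_contra hne
      have := (hall (v D) (Finset.mem_insert_self _ _) hne).1
      rw [Finset.erase_insert hvD] at this
      exact this hdeg
    refine (hall (y D) (Finset.mem_insert_of_mem hy) ?_).2
    rw [← hvx]
    intro h
    rw [h] at hy
    exact hvD hy
  have hgood : (𝒟.filter fun D => ¬ isBad D).card ≤ (X1 \ C0).card := by
    have : ∀ D : Finset ℕ, ∃ v, (D ∈ 𝒟 ∧ ¬ isBad D) → v ∈ c D ∧ insert v D ∉ C0 := by
      intro D
      by_cases hD : D ∈ 𝒟 ∧ ¬ isBad D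
      · by_contra hcon
        push Not at hcon
        have hall : ∀ v ∈ c D, insert v D ∈ C0 := fun v hv => (hcon v).2 hv
        have hq : ∀ v ∈ c D, ∃ Q ⊆ D, Q.card ≤ ℓ ∧ v ∈ T Q ∧
            ∀ Q' ⊆ D, Q'.card ≤ ℓ → Q' ≠ Q → r Q < r Q' := by
          intro v hv
          obtain ⟨Q, hQ, hQl, hd, hr⟩ := hcaught _ (hall v hv)
          rw [Finset.not_disjoint_iff] at hd
          obtain ⟨y, hy1, hy2⟩ := hd
          rw [Finset.mem_sdiff] at hy2
          have hQy : Q ⊆ (insert v D).erase y := by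
            intro z hz
            rw [Finset.mem_erase]
            refine ⟨?_, hQ hz⟩
            rintro rfl
            exact hy2.2 hz
          have hyv : y = v := by
            rcases Finset.mem_insert.1 hy2.1 with h | h
            · exact h
            · exact absurd ⟨v, hv, y, h, Q, hQy, hy1⟩ hD.2
          subst hyv
          rw [Finset.erase_insert (hcD D hD.1 y hv).2.1] at hQy
          refine ⟨Q, hQy, hQl, hy1, ?_⟩
          intro Q' hQ'
          exact hr Q' (hQ'.trans (Finset.subset_insert _ _))
        have hcc := (hc D (hD1 D hD.1).1).2
        have hne : (c D).Nonempty := by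
          rw [← Finset.card_pos]; omega
        obtain ⟨v0, hv0⟩ := hne
        obtain ⟨Q, hQ, hQl, -, hQr⟩ := hq v0 hv0
        have hss : c D ⊆ T Q ∩ L := by
          intro v hv
          rw [Finset.mem_inter]
          refine ⟨?_, (hcD D hD.1 v hv).1⟩
          obtain ⟨Q', hQ', hQl', hvT, hQr'⟩ := hq v hv
          by_cases hQQ : Q' = Q
          · rw [← hQQ]; exact hvT
          · have a1 := hQr Q' hQ' hQl' hQQ
            have a2 := hQr' Q hQ hQl (Ne.symm hQQ)
            omega
        have := Finset.card_le_card hss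
        have := hTL Q
        omega
      · exact ⟨0, fun h => absurd h hD⟩
    choose v hv using this
    refine Finset.card_le_card_of_injOn (fun D => insert (v D) D) ?_ ?_
    · intro D hD
      have hD' := Finset.mem_filter.1 (Finset.mem_coe.1 hD)
      refine Finset.mem_coe.2 (Finset.mem_sdiff.2 ⟨?_, (hv D hD').2⟩)
      exact (hX1 _).2 ⟨D, hD'.1, v D, (hv D hD').1, rfl⟩
    · intro D hD D' hD' h
      have hD := Finset.mem_filter.1 (Finset.mem_coe.1 hD)
      have hD' := Finset.mem_filter.1 (Finset.mem_coe.1 hD')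
      rw [← hsd D hD.1 _ (hv D hD).1, ← hsd D' hD'.1 _ (hv D' hD').1]
      simp only at h
      rw [h]
  have e1 := Finset.card_filter_add_card_filter_not (s := 𝒟) isBad
  have e2 := Finset.card_sdiff_add_card_eq_card hsub
  omega

lemma sum_deg (k n : ℕ) (hk : 1 ≤ k) (G : Finset (Finset ℕ)) (hG : IsKGraphOn k n G) :
    ∑ D ∈ (vtx n).powersetCard (k - 1), uDeg G D ≤ k * G.card := by
  have h : ∑ D ∈ (vtx n).powersetCard (k - 1), uDeg G D =
      ∑ E ∈ G, (((vtx n).powersetCard (k - 1)).filter fun D => D ⊆ E).card := by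
    simp only [uDeg, Finset.card_filter]
    exact Finset.sum_comm
  rw [h, mul_comm, ← smul_eq_mul]
  refine Finset.sum_le_card_nsmul _ _ _ ?_
  intro E hE
  have hs : (((vtx n).powersetCard (k - 1)).filter fun D => D ⊆ E) ⊆ E.powersetCard (k - 1) := by
    intro D hD
    rw [Finset.mem_filter, Finset.mem_powersetCard] at hD
    exact Finset.mem_powersetCard.2 ⟨hD.2, hD.1.2⟩
  refine (Finset.card_le_card hs).trans ?_
  rw [Finset.card_powersetCard, (hG E hE).2]
  obtain ⟨j, rfl⟩ : ∃ j, k = j + 1 := ⟨k - 1, by omega⟩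
  simp

lemma pigeon (k n Λ r : ℕ) (hr : 1 ≤ r) (G : Finset (Finset ℕ)) (hG : IsKGraphOn k n G) :
    ∃ i < r, r * (G.filter fun E => ∃ y ∈ E, Λ ^ i ≤ uDeg G (E.erase y) ∧
      uDeg G (E.erase y) < Λ ^ (i + 1)).card ≤ k * G.card := by
  by_contra hcon
  push Not at hcon
  have h1 := Finset.sum_lt_sum_of_nonempty (s := Finset.range r) ⟨0, by simp; omega⟩
    (fun i hi => hcon i (Finset.mem_range.1 hi))
  rw [Finset.sum_const, Finset.card_range, smul_eq_mul, ← Finset.mul_sum] at h1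
  have h2 := Nat.lt_of_mul_lt_mul_left h1
  have h3 : ∑ i ∈ Finset.range r, (G.filter fun E => ∃ y ∈ E, Λ ^ i ≤ uDeg G (E.erase y) ∧
      uDeg G (E.erase y) < Λ ^ (i + 1)).card =
      ∑ E ∈ G, ((Finset.range r).filter fun i => ∃ y ∈ E, Λ ^ i ≤ uDeg G (E.erase y) ∧
      uDeg G (E.erase y) < Λ ^ (i + 1)).card := by
    simp only [Finset.card_filter]
    exact Finset.sum_comm
  rw [h3] at h2
  have h4 : ∑ E ∈ G, ((Finset.range r).filter fun i => ∃ y ∈ E, Λ ^ i ≤ uDeg G (E.erase y) ∧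
      uDeg G (E.erase y) < Λ ^ (i + 1)).card ≤ G.card • k := by
    refine Finset.sum_le_card_nsmul _ _ _ ?_
    intro E hE
    rw [← (hG E hE).2]
    refine le_trans (Finset.card_le_card ?_)
      (Finset.card_image_le (s := E) (f := fun y => Nat.log Λ (uDeg G (E.erase y))))
    intro i hi
    rw [Finset.mem_filter] at hi
    obtain ⟨-, y, hy, a1, a2⟩ := hi
    rw [Finset.mem_image]
    exact ⟨y, hy, Nat.log_eq_of_pow_le_of_lt_pow a1 a2⟩
  rw [smul_eq_mul, mul_comm] at h4
  omega


/-- Trichotomy of the edges of `G` with respect to codegree thresholds. -/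
lemma tri_split (k n s s' : ℕ) (hk : 1 ≤ k) (G X : Finset (Finset ℕ)) (hG : IsKGraphOn k n G)
    (hX : X = G.filter fun E => ∃ y ∈ E, s ≤ uDeg G (E.erase y) ∧ uDeg G (E.erase y) < s') :
    ∃ 𝓗 G0 G1 G2 : Finset (Finset ℕ), (∀ Z ∈ 𝓗, Z.card ≤ k) ∧ 𝓗.card * s' ≤ k * G.card ∧
      G0 ⊆ G ∧ G1 ⊆ G ∧ G2 ⊆ G ∧ G.card ≤ X.card + G0.card + G1.card + G2.card ∧
      (∀ E ∈ G0, ∀ y ∈ E, E.erase y ∈ 𝓗) ∧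
      (∀ E ∈ G1, ∃ x ∈ E, uDeg G (E.erase x) < s ∧
        ∀ y ∈ E, y ≠ x → ¬ uDeg G (E.erase y) < s ∧ E.erase y ∈ 𝓗) ∧
      (∀ E ∈ G2, ∃ x ∈ E, ∃ x' ∈ E, x ≠ x' ∧ uDeg G (E.erase x) < s ∧
        uDeg G (E.erase x') < s) := by
  let 𝓗 := ((vtx n).powersetCard (k - 1)).filter fun D => s' ≤ uDeg G D
  have key : ∀ E ∈ G, E ∉ X → ∀ y ∈ E, ¬ uDeg G (E.erase y) < s → E.erase y ∈ 𝓗 := by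
    intro E hE hEX y hy hs
    refine Finset.mem_filter.2 ⟨Finset.mem_powersetCard.2 ⟨(Finset.erase_subset _ _).trans
      (hG E hE).1, ?_⟩, ?_⟩
    · rw [Finset.card_erase_of_mem hy, (hG E hE).2]
    · by_contra hlt
      apply hEX
      rw [hX, Finset.mem_filter]
      exact ⟨hE, y, hy, not_lt.1 hs, not_le.1 hlt⟩
  let P0 : Finset ℕ → Prop := fun E => ∀ y ∈ E, ¬ uDeg G (E.erase y) < s
  let P2 : Finset ℕ → Prop := fun E => ∃ x ∈ E, ∃ x' ∈ E, x ≠ x' ∧ uDeg G (E.erase x) < s ∧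
        uDeg G (E.erase x') < s
  refine ⟨𝓗, (G \ X).filter P0, (G \ X).filter fun E => ¬ P0 E ∧ ¬ P2 E, (G \ X).filter P2,
    ?_, ?_, ?_, ?_, ?_, ?_, ?_, ?_, ?_⟩
  · intro Z hZ
    have := (Finset.mem_powersetCard.1 (Finset.mem_filter.1 hZ).1).2
    omega
  · calc 𝓗.card * s' = ∑ D ∈ 𝓗, s' := by simp
      _ ≤ ∑ D ∈ 𝓗, uDeg G D := Finset.sum_le_sum fun D hD => (Finset.mem_filter.1 hD).2
      _ ≤ ∑ D ∈ (vtx n).powersetCard (k - 1), uDeg G D :=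
          Finset.sum_le_sum_of_subset (Finset.filter_subset _ _)
      _ ≤ _ := sum_deg k n hk G hG
  · exact (Finset.filter_subset _ _).trans Finset.sdiff_subset
  · exact (Finset.filter_subset _ _).trans Finset.sdiff_subset
  · exact (Finset.filter_subset _ _).trans Finset.sdiff_subset
  · have hsub : G ⊆ ((X ∪ (G \ X).filter P0) ∪ (G \ X).filter fun E => ¬ P0 E ∧ ¬ P2 E) ∪
        (G \ X).filter P2 := by
      intro E hE
      simp only [Finset.mem_union, Finset.mem_filter, Finset.mem_sdiff]
      by_cases h1 : E ∈ X
      · exact Or.inl (Or.inl (Or.inl h1))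
      by_cases h2 : P2 E
      · exact Or.inr ⟨⟨hE, h1⟩, h2⟩
      by_cases h3 : P0 E
      · exact Or.inl (Or.inl (Or.inr ⟨⟨hE, h1⟩, h3⟩))
      · exact Or.inl (Or.inr ⟨⟨hE, h1⟩, h3, h2⟩)
    refine (Finset.card_le_card hsub).trans ?_
    refine (Finset.card_union_le _ _).trans (Nat.add_le_add_right ?_ _)
    refine (Finset.card_union_le _ _).trans (Nat.add_le_add_right ?_ _)
    exact Finset.card_union_le _ _
  · intro E hE y hy
    rw [Finset.mem_filter, Finset.mem_sdiff] at hE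
    exact key E hE.1.1 hE.1.2 y hy (hE.2 y hy)
  · intro E hE
    rw [Finset.mem_filter, Finset.mem_sdiff] at hE
    obtain ⟨⟨hEG, hEX⟩, h0, h2⟩ := hE
    have h0' : ∃ x ∈ E, uDeg G (E.erase x) < s := by
      by_contra hcon
      exact h0 fun y hy hs => hcon ⟨y, hy, hs⟩
    obtain ⟨x, hx, hxs⟩ := h0'
    refine ⟨x, hx, hxs, fun y hy hyx => ?_⟩
    have : ¬ uDeg G (E.erase y) < s := fun hs => h2 ⟨y, hy, x, hx, hyx, hs, hxs⟩
    exact ⟨this, key E hEG hEX y hy this⟩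
  · intro E hE
    exact (Finset.mem_filter.1 hE).2

set_option maxHeartbeats 1000000 in
lemma shrinkMain {α : Type} [DecidableEq α] (k ℓ m σ : ℕ) (hk : 2 ≤ k)
    (H : Finset (Finset α)) (hH : IsKTree k H) (h2 : TwoContractible H)
    (hov : Overlapping ℓ H) (hm : (vertexSet H).card ≤ m)
    (S : Finset α) (hS : IsCrosscut H S) (hSσ : S.card = σ) (hσ : 1 ≤ σ)
    (ε M : ℝ) (hε : 0 < ε) (hM : 0 < M) :
    ∃ c : ℝ, 0 < c ∧ ∃ n₀ : ℕ, ∀ n ≥ n₀, ∀ G : Finset (Finset ℕ), IsKGraphOn k n G →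
      ((σ : ℝ) - 1 + ε) * (n.choose (k - 1) : ℝ) ≤ G.card →
      (G.card : ℝ) ≤ M * (n.choose (k - 1) : ℝ) →
      ∃ 𝒞, Cov H G 𝒞 (bd n m ℓ) ∧
        ∀ C ∈ 𝒞, (C.card : ℝ) + c * (n.choose (k - 1) : ℝ) ≤ G.card := by
  obtain ⟨A, hA⟩ : ∃ A : ℝ, A = 2 ^ (k + σ) := ⟨_, rfl⟩
  obtain ⟨c2, hc2⟩ : ∃ c2 : ℝ, c2 = 2 ^ k * m := ⟨_, rfl⟩
  have hA1 : 1 ≤ A := by rw [hA]; exact one_le_pow₀ (by norm_num)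
  have hc20 : 0 ≤ c2 := by rw [hc2]; positivity
  obtain ⟨r, hr⟩ := exists_nat_ge (max 1 (4 * k * M / ε))
  obtain ⟨Λ, hΛ⟩ := exists_nat_ge (max 1 (8 * A * c2 * k * M / ε))
  have hr1 : (1 : ℝ) ≤ r := (le_max_left _ _).trans hr
  have hr2 : 4 * k * M ≤ r * ε := (div_le_iff₀ hε).1 ((le_max_right _ _).trans hr)
  have hΛ1 : (1 : ℝ) ≤ Λ := (le_max_left _ _).trans hΛ
  have hΛ2 : 8 * A * c2 * k * M ≤ Λ * ε := (div_le_iff₀ hε).1 ((le_max_right _ _).trans hΛ)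
  obtain ⟨L, hL⟩ : ∃ L : ℝ, L = (Λ : ℝ) ^ r := ⟨_, rfl⟩
  have hL1 : 1 ≤ L := by rw [hL]; exact one_le_pow₀ hΛ1
  obtain ⟨n1, hn1⟩ := exists_nat_ge (8 * L * c2 * ((k - 1 : ℕ) : ℝ) / ε)
  have hn1' := (div_le_iff₀ hε).1 hn1
  have hAL : 1 ≤ L * A := one_le_mul_of_one_le_of_one_le hL1 hA1
  refine ⟨ε / (8 * (L * A)), by positivity, n1 + k, ?_⟩
  intro n hn G hG hlow hup
  obtain ⟨N, hN⟩ : ∃ N : ℝ, N = (n.choose (k - 1) : ℝ) := ⟨_, rfl⟩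
  rw [← hN] at hlow hup ⊢
  have hN0 : 0 ≤ N := by rw [hN]; positivity
  have hεN : 0 ≤ ε * N := by positivity
  -- the decrement
  have hcN : ε / (8 * (L * A)) * N * (8 * (L * A)) = ε * N := by field_simp
  have hcN0 : 0 ≤ ε / (8 * (L * A)) * N := by positivity
  generalize ε / (8 * (L * A)) * N = cN at hcN hcN0 ⊢
  have hcN8 : 8 * cN ≤ ε * N := by nlinarith
  obtain ⟨i, hir, hi⟩ := pigeon k n Λ r (by exact_mod_cast hr1) G hG
  obtain ⟨X, hX⟩ : ∃ X, X = G.filter fun E => ∃ y ∈ E, Λ ^ i ≤ uDeg G (E.erase y) ∧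
      uDeg G (E.erase y) < Λ ^ (i + 1) := ⟨_, rfl⟩
  rw [← hX] at hi
  obtain ⟨𝓗, G0, G1, G2, hHk, hHc, hG0, hG1, hG2, hsum, hE0, hE1, hE2⟩ :=
    tri_split k n (Λ ^ i) (Λ ^ (i + 1)) (by omega) G X hG hX
  obtain ⟨s, hs⟩ : ∃ s : ℝ, s = (Λ : ℝ) ^ i := ⟨_, rfl⟩
  have hs1 : 1 ≤ s := by rw [hs]; exact one_le_pow₀ hΛ1
  have hsL : s ≤ L := by rw [hs, hL]; exact pow_le_pow_right₀ hΛ1 hir.le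
  have hsumR : (G.card : ℝ) ≤ X.card + G0.card + G1.card + G2.card := by exact_mod_cast hsum
  have hkG : (k : ℝ) * G.card ≤ k * M * N := by
    rw [mul_assoc]; exact mul_le_mul_of_nonneg_left hup (by positivity)
  have hXs : 4 * (X.card : ℝ) ≤ ε * N := by
    have h1 : (r : ℝ) * X.card ≤ k * G.card := by exact_mod_cast hi
    have h3 : 4 * k * M * N ≤ r * ε * N := mul_le_mul_of_nonneg_right hr2 hN0
    have h4 : (r : ℝ) * (4 * X.card) ≤ r * (ε * N) := by nlinarith
    exact le_of_mul_le_mul_left h4 (by linarith)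
  have hh : 8 * (s * A) * (𝓗.card * c2) ≤ ε * N := by
    have h1 : (𝓗.card : ℝ) * (Λ * s) ≤ k * G.card := by
      rw [hs, ← pow_succ']; exact_mod_cast hHc
    have h3 : 8 * A * c2 * k * M * N ≤ Λ * ε * N := mul_le_mul_of_nonneg_right hΛ2 hN0
    have h5 : 8 * A * c2 * ((𝓗.card : ℝ) * (Λ * s)) ≤ 8 * A * c2 * (k * M * N) :=
      mul_le_mul_of_nonneg_left (h1.trans hkG) (by positivity)
    have h4 : (Λ : ℝ) * (8 * (s * A) * (𝓗.card * c2)) ≤ Λ * (ε * N) := by nlinarith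
    exact le_of_mul_le_mul_left h4 (by linarith)
  have hh8 : 8 * (𝓗.card * c2) ≤ ε * N := by
    have : 1 ≤ s * A := one_le_mul_of_one_le_of_one_le hs1 hA1
    have h3 : 0 ≤ 8 * (𝓗.card * c2) := by positivity
    nlinarith
  by_cases hc0 : ε * N ≤ 4 * G0.card
  · obtain ⟨𝒞, hcov, hC⟩ := shrink0 k ℓ n m hk H hH h2 hov hm G G0 𝓗 hG hG0 hHk hE0
    refine ⟨𝒞, hcov, fun C hCC => ?_⟩
    have h : (C.card : ℝ) + G0.card ≤ G.card + 𝓗.card * c2 := by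
      rw [hc2]; exact_mod_cast hC C hCC
    linarith
  by_cases hc2' : ε * N ≤ 4 * G2.card
  · obtain ⟨𝒞, hcov, hC⟩ := shrink2 k ℓ n m (Λ ^ i) hk H hH h2 hov hm G G2 hG hG2 hE2
    refine ⟨𝒞, hcov, fun C hCC => ?_⟩
    have h : (C.card : ℝ) + G2.card ≤ G.card + s * (n.choose (k - 2) * c2) := by
      rw [hc2, hs]; exact_mod_cast hC C hCC
    have hb : 8 * (s * (n.choose (k - 2) * c2)) ≤ ε * N := by
      have hch := Nat.choose_succ_right_eq n (k - 2)
      have hk1 : k - 2 + 1 = k - 1 := by omega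
      rw [hk1] at hch
      have hchR : N * ((k - 1 : ℕ) : ℝ) = n.choose (k - 2) * ((n - (k - 2) : ℕ) : ℝ) := by
        rw [hN]; exact_mod_cast hch
      have hnn : (n1 : ℝ) ≤ ((n - (k - 2) : ℕ) : ℝ) := by
        have : n1 ≤ n - (k - 2) := by omega
        exact_mod_cast this
      have hq : (0 : ℝ) < ((k - 1 : ℕ) : ℝ) := by
        have : 0 < k - 1 := by omega
        exact_mod_cast this
      have ha : (0 : ℝ) ≤ n.choose (k - 2) := by positivity
      have h5 : 8 * L * c2 * ((k - 1 : ℕ) : ℝ) ≤ ((n - (k - 2) : ℕ) : ℝ) * ε :=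
        hn1'.trans (mul_le_mul_of_nonneg_right hnn hε.le)
      have h6 := mul_le_mul_of_nonneg_left h5 ha
      have h7 : s * (n.choose (k - 2) * c2) ≤ L * (n.choose (k - 2) * c2) :=
        mul_le_mul_of_nonneg_right hsL (by positivity)
      have h8 : ((k - 1 : ℕ) : ℝ) * (8 * (L * (n.choose (k - 2) * c2))) ≤
          ((k - 1 : ℕ) : ℝ) * (ε * N) := by
        have : ((k - 1 : ℕ) : ℝ) * (ε * N) = ε * (n.choose (k - 2) * ((n - (k - 2) : ℕ) : ℝ)) := by
          rw [← hchR]; ring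
        rw [this]; linarith
      have h9 := le_of_mul_le_mul_left h8 hq
      linarith
    linarith
  obtain ⟨𝒞, d, hcov, hd, hC⟩ := shrink1 k ℓ n m (Λ ^ i) σ hk H hH hov hm S hS hSσ hσ G G1 𝓗
    hG hG1 hHk hE1
  refine ⟨𝒞, hcov, fun C hCC => ?_⟩
  have h : (C.card : ℝ) + d ≤ G.card + 𝓗.card * c2 := by
    rw [hc2]; exact_mod_cast hC C hCC
  have hd' : (G1.card : ℝ) ≤ ((σ : ℝ) - 1) * N + s * (A * d) := by
    have h3 : (G1.card : ℝ) ≤ ((σ - 1 : ℕ) : ℝ) * N + s * (A * d) := by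
      rw [hN, hs, hA]; exact_mod_cast hd
    rwa [Nat.cast_sub hσ, Nat.cast_one] at h3
  push Not at hc0 hc2'
  have h1 : ε * N ≤ 4 * (s * A) * d := by linarith
  have h3 : ε * N ≤ 8 * (s * A) * (d - 𝓗.card * c2) := by linarith
  have h4 : s * A * (8 * cN) ≤ s * A * (8 * (d - 𝓗.card * c2)) := by
    have : s * A ≤ L * A := mul_le_mul_of_nonneg_right hsL (by linarith)
    have h5 : s * A * (8 * cN) ≤ L * A * (8 * cN) :=
      mul_le_mul_of_nonneg_right this (by linarith)
    linarith
  have h5 := le_of_mul_le_mul_left h4 (by positivity)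
  linarith

lemma Cov.bind {α : Type} [DecidableEq α] {H : Finset (Finset α)} {G : Finset (Finset ℕ)}
    {𝒞 : Finset (Finset (Finset ℕ))} {b b' : ℕ} (h : Cov H G 𝒞 b) (P : Finset (Finset ℕ) → Prop)
    (h' : ∀ C ∈ 𝒞, ∃ 𝒟, Cov H C 𝒟 b' ∧ ∀ D ∈ 𝒟, P D) :
    ∃ 𝒟, Cov H G 𝒟 (b * b') ∧ ∀ D ∈ 𝒟, P D := by
  have h'' : ∀ C, ∃ 𝒟, C ∈ 𝒞 → Cov H C 𝒟 b' ∧ ∀ D ∈ 𝒟, P D := by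
    intro C
    by_cases hC : C ∈ 𝒞
    · obtain ⟨𝒟, hD⟩ := h' C hC
      exact ⟨𝒟, fun _ => hD⟩
    · exact ⟨∅, fun h => absurd h hC⟩
  choose f hf using h''
  refine ⟨𝒞.biUnion f, ⟨?_, ?_, ?_⟩, ?_⟩
  · intro D hD
    obtain ⟨C, hC, hDC⟩ := Finset.mem_biUnion.1 hD
    exact ((hf C hC).1.1 D hDC).trans (h.1 C hC)
  · exact (Finset.card_biUnion_le_card_mul _ _ _ fun C hC => (hf C hC).1.2.1).trans
      (Nat.mul_le_mul_right _ h.2.1)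
  · intro I hI hfree
    obtain ⟨C, hC, hIC⟩ := h.2.2 I hI hfree
    obtain ⟨D, hD, hID⟩ := (hf C hC).1.2.2 I hIC hfree
    exact ⟨D, Finset.mem_biUnion.2 ⟨C, hC, hD⟩, hID⟩
  · intro D hD
    obtain ⟨C, hC, hDC⟩ := Finset.mem_biUnion.1 hD
    exact (hf C hC).2 D hDC

lemma one_le_bd (n m ℓ : ℕ) : 1 ≤ bd n m ℓ :=
  Nat.one_le_pow _ _ (Nat.pow_pos (Nat.succ_pos n))

lemma iterate_cov {α : Type} [DecidableEq α] (k n b : ℕ) (hb : 1 ≤ b) (H : Finset (Finset α))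
    (u w c : ℝ) (hc : 0 ≤ c)
    (hstep : ∀ G : Finset (Finset ℕ), IsKGraphOn k n G → u ≤ G.card → (G.card : ℝ) ≤ w →
      ∃ 𝒞, Cov H G 𝒞 b ∧ ∀ C ∈ 𝒞, (C.card : ℝ) + c ≤ G.card) (j : ℕ) :
    ∀ G : Finset (Finset ℕ), IsKGraphOn k n G → (G.card : ℝ) ≤ w → (G.card : ℝ) ≤ u + j * c →
      ∃ 𝒞, Cov H G 𝒞 (b ^ j) ∧ ∀ C ∈ 𝒞, (C.card : ℝ) ≤ u := by
  induction j with
  | zero =>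
    intro G hG hw hu
    refine ⟨{G}, ⟨by simp, by simp, fun I hI _ => ⟨G, by simp, hI⟩⟩, ?_⟩
    intro C hC
    rw [Finset.mem_singleton.1 hC]
    simpa using hu
  | succ j ih =>
    intro G hG hw hu
    by_cases hGu : (G.card : ℝ) ≤ u
    · refine ⟨{G}, ⟨by simp, ?_, fun I hI _ => ⟨G, by simp, hI⟩⟩, ?_⟩
      · simpa using Nat.one_le_pow _ _ hb
      · intro C hC
        rw [Finset.mem_singleton.1 hC]
        exact hGu
    · obtain ⟨𝒞, hcov, hC⟩ := hstep G hG (not_le.1 hGu).le hw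
      rw [pow_succ']
      refine hcov.bind _ fun C hCC => ?_
      have h1 := hC C hCC
      push_cast at hu
      exact ih C (fun E hE => hG E (hcov.1 C hCC hE)) (by linarith) (by linarith)

lemma final_bound (k ℓ m J : ℕ) (hk : 1 ≤ k) (hℓ : ℓ ≤ k - 1) :
    ∃ K : ℝ, 0 < K ∧ ∀ n : ℕ, 2 * k + 3 ≤ n →
      (((bd n m ℓ) ^ J : ℕ) : ℝ) ≤
        Real.exp (K * (Real.log n) ^ 2 * (n.choose (k - 1) : ℝ) / (n : ℝ) ^ (k - ℓ - 1)) := by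
  obtain ⟨B, hB⟩ : ∃ B : ℝ, B = 2 ^ (k - 1) * ((k - 1).factorial : ℝ) := ⟨_, rfl⟩
  have hB0 : 0 < B := by rw [hB]; positivity
  refine ⟨(J * (m + ℓ) + 1) * (2 ^ ℓ * 2) * B, by positivity, ?_⟩
  intro n hn
  have hn3 : (3 : ℝ) ≤ n := by
    have : 3 ≤ n := by omega
    exact_mod_cast this
  have hn0 : (0 : ℝ) < n := by linarith
  have hlog1 : 1 ≤ Real.log n := by
    rw [Real.le_log_iff_exp_le hn0]
    linarith [Real.exp_one_lt_d9]
  have hlog2 : Real.log ((n : ℝ) + 1) ≤ 2 * Real.log n := by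
    have : 2 * Real.log n = Real.log ((n : ℝ) ^ 2) := by rw [Real.log_pow]; norm_num
    rw [this]
    exact Real.log_le_log (by linarith) (by nlinarith)
  have hlog0 : 0 ≤ Real.log ((n : ℝ) + 1) := Real.log_nonneg (by linarith)
  -- lower bound for the binomial coefficient
  have hch : (n : ℝ) ^ (k - 1) ≤ B * (n.choose (k - 1) : ℝ) := by
    have h1 := Nat.pow_le_choose (α := ℝ) (k - 1) n
    rw [div_le_iff₀ (by positivity)] at h1
    have h3 : (n : ℝ) ≤ 2 * ((n + 1 - (k - 1) : ℕ) : ℝ) := by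
      have : n ≤ 2 * (n + 1 - (k - 1)) := by omega
      exact_mod_cast this
    calc (n : ℝ) ^ (k - 1) ≤ (2 * ((n + 1 - (k - 1) : ℕ) : ℝ)) ^ (k - 1) :=
          pow_le_pow_left₀ hn0.le h3 _
      _ = 2 ^ (k - 1) * ((n + 1 - (k - 1) : ℕ) : ℝ) ^ (k - 1) := by rw [mul_pow]
      _ ≤ 2 ^ (k - 1) * ((n.choose (k - 1) : ℝ) * ((k - 1).factorial : ℝ)) :=
          mul_le_mul_of_nonneg_left (by exact_mod_cast h1) (by positivity)
      _ = _ := by rw [hB]; ring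
  have hdiv : (n : ℝ) ^ ℓ ≤ B * ((n.choose (k - 1) : ℝ) / (n : ℝ) ^ (k - ℓ - 1)) := by
    rw [← mul_div_assoc, le_div_iff₀ (by positivity), ← pow_add]
    have : ℓ + (k - ℓ - 1) = k - 1 := by omega
    rw [this]; exact hch
  have hbd : (((bd n m ℓ) ^ J : ℕ) : ℝ) =
      Real.exp (J * (m + ℓ) * ((n : ℝ) + 1) ^ ℓ * Real.log ((n : ℝ) + 1)) := by
    have h1 : (0 : ℝ) < (n : ℝ) + 1 := by linarith
    have : (((bd n m ℓ) ^ J : ℕ) : ℝ) = ((n : ℝ) + 1) ^ ((m + ℓ) * (n + 1) ^ ℓ * J) := by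
      unfold bd
      push_cast
      rw [← pow_mul, ← pow_mul, mul_assoc]
    rw [this, ← Real.exp_log (pow_pos h1 _), Real.log_pow]
    push_cast
    congr 1
    ring
  rw [hbd, Real.exp_le_exp]
  have h1 : ((n : ℝ) + 1) ^ ℓ ≤ 2 ^ ℓ * (n : ℝ) ^ ℓ := by
    rw [← mul_pow]
    exact pow_le_pow_left₀ (by linarith) (by linarith) _
  have hJ : (0 : ℝ) ≤ J * (m + ℓ) := by positivity
  calc J * (m + ℓ) * ((n : ℝ) + 1) ^ ℓ * Real.log ((n : ℝ) + 1)
      ≤ (J * (m + ℓ) + 1) * (2 ^ ℓ * (n : ℝ) ^ ℓ) * (2 * Real.log n ^ 2) := by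
        have h5 : Real.log n ≤ Real.log n ^ 2 := by nlinarith
        apply mul_le_mul _ (by linarith) hlog0 (by positivity)
        exact mul_le_mul (by linarith) h1 (by positivity) (by positivity)
    _ = (J * (m + ℓ) + 1) * (2 ^ ℓ * 2) * Real.log n ^ 2 * (n : ℝ) ^ ℓ := by ring
    _ ≤ (J * (m + ℓ) + 1) * (2 ^ ℓ * 2) * Real.log n ^ 2 *
        (B * ((n.choose (k - 1) : ℝ) / (n : ℝ) ^ (k - ℓ - 1))) :=
        mul_le_mul_of_nonneg_left hdiv (by positivity)
    _ = _ := by ring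

lemma hypertree_nonempty {α : Type} [DecidableEq α] {H : Finset (Finset α)}
    (h : IsHypertree H) : H.Nonempty := by
  cases h with
  | single E => exact ⟨E, by simp⟩
  | grow E F hH hE hF hint => exact ⟨E, by simp⟩

lemma main_of_le {α : Type} [DecidableEq α] (k ℓ σ : ℕ) (hk : 4 ≤ k) (hℓ : ℓ ≤ k - 1)
    (H : Finset (Finset α)) (hH : IsKTree k H) (h2 : TwoContractible H)
    (hov : Overlapping ℓ H) (hσ : IsCrosscutNumber H σ)
    (ε : ℝ) (hε : 0 < ε) :
    ∃ K : ℝ, 0 < K ∧ ∃ n₀ : ℕ, ∀ n ≥ n₀,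
      ∃ 𝒞 : Finset (Finset (Finset ℕ)),
        (∀ C ∈ 𝒞, IsKGraphOn k n C) ∧
        ((𝒞.card : ℝ) ≤
          Real.exp (K * (Real.log n) ^ 2 * (n.choose (k - 1) : ℝ) / (n : ℝ) ^ (k - ℓ - 1))) ∧
        (∀ I : Finset (Finset ℕ), IsKGraphOn k n I → HFree H I → ∃ C ∈ 𝒞, I ⊆ C) ∧
        (∀ C ∈ 𝒞, (C.card : ℝ) ≤ ((σ : ℝ) - 1 + ε) * (n.choose (k - 1) : ℝ)) := by
  obtain ⟨⟨S, hS, hSσ⟩, -⟩ := hσ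
  have hσ1 : 1 ≤ σ := by
    obtain ⟨E, hE⟩ := hypertree_nonempty hH.1
    have h1 := hS E hE
    have h3 := Finset.card_le_card (Finset.inter_subset_right : E ∩ S ⊆ S)
    omega
  have hσR : (1 : ℝ) ≤ σ := by exact_mod_cast hσ1
  obtain ⟨m, hm⟩ : ∃ m, m = (vertexSet H).card := ⟨_, rfl⟩
  obtain ⟨M, hM⟩ : ∃ M : ℝ, M = 2 ^ k * m + 1 := ⟨_, rfl⟩
  have hM0 : 0 < M := by rw [hM]; positivity
  obtain ⟨c, hc, n1, hmain⟩ := shrinkMain k ℓ m σ (by omega) H hH h2 hov hm.ge S hS hSσ hσ1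
    ε M hε hM0
  obtain ⟨J, hJ⟩ := exists_nat_ge (M / c)
  rw [div_le_iff₀ hc] at hJ
  obtain ⟨K, hK, hfin⟩ := final_bound k ℓ m (J + 1) (by omega) hℓ
  refine ⟨K, hK, n1 + (2 * k + 3), ?_⟩
  intro n hn
  have hN0 : (0 : ℝ) ≤ n.choose (k - 1) := by positivity
  let G := (vtx n).powersetCard k
  have hG : IsKGraphOn k n G := fun E hE => Finset.mem_powersetCard.1 hE
  obtain ⟨𝒞, hcov, hC⟩ := shrink0 k ℓ n m (by omega) H hH h2 hov hm.ge G G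
    ((vtx n).powersetCard (k - 1)) hG (Finset.Subset.refl _)
    (fun Z hZ => by have := (Finset.mem_powersetCard.1 hZ).2; omega)
    (fun E hE y hy => Finset.mem_powersetCard.2 ⟨(Finset.erase_subset _ _).trans (hG E hE).1, by
      rw [Finset.card_erase_of_mem hy, (hG E hE).2]⟩)
  have hP : ((vtx n).powersetCard (k - 1)).card = n.choose (k - 1) := by
    rw [Finset.card_powersetCard, card_vtx]
  rw [hP] at hC
  have hit := iterate_cov k n (bd n m ℓ) (one_le_bd n m ℓ) H
    (((σ : ℝ) - 1 + ε) * (n.choose (k - 1) : ℝ)) (M * (n.choose (k - 1) : ℝ))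
    (c * (n.choose (k - 1) : ℝ)) (by positivity) (hmain n (by omega)) J
  obtain ⟨𝒟, hD, hDc⟩ := hcov.bind
    (fun D => (D.card : ℝ) ≤ ((σ : ℝ) - 1 + ε) * (n.choose (k - 1) : ℝ)) (fun C hCC => by
      have h1 : C.card ≤ n.choose (k - 1) * (2 ^ k * m) := by
        have := hC C hCC
        omega
      have h1R : (C.card : ℝ) ≤ n.choose (k - 1) * (2 ^ k * m) := by exact_mod_cast h1
      have h3 : (C.card : ℝ) ≤ M * (n.choose (k - 1) : ℝ) := by rw [hM]; linarith
      refine hit C (fun E hE => hG E (hcov.1 C hCC hE)) h3 (h3.trans ?_)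
      have h4 := mul_le_mul_of_nonneg_right hJ hN0
      have h5 : 0 ≤ ((σ : ℝ) - 1 + ε) * (n.choose (k - 1) : ℝ) :=
        mul_nonneg (by linarith) hN0
      linarith)
  refine ⟨𝒟, fun C hCD E hE => hG E (hD.1 C hCD hE), ?_, ?_, hDc⟩
  · refine le_trans ?_ (hfin n (by omega))
    rw [pow_succ']
    exact_mod_cast hD.2.1
  · intro I hI hfree
    exact hD.2.2 I (fun E hE => Finset.mem_powersetCard.2 (hI E hE)) hfree

/-- containers for `H`-free graphs: for a 2-contractible `ℓ`-overlapping
`k`-tree `H` with `t` edges and cross-cut number `σ`, and `ε > 0`, there is `K > 0` such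
that for large `n` there is a family `𝒞` of at most
`exp(K·(log n)²·C(n,k−1)/n^{k−ℓ−1})` `k`-graphs on `[n]`, each of size at most
`(σ−1+ε)·C(n,k−1)`, containing every `H`-free `k`-graph on `[n]`. -/
theorem stmt_18 {α : Type} [DecidableEq α] (k ℓ t σ : ℕ) (hk : 4 ≤ k)
    (H : Finset (Finset α)) (hH : IsKTree k H) (h2 : TwoContractible H)
    (hov : Overlapping ℓ H) (hte : H.card = t) (hσ : IsCrosscutNumber H σ)
    (ε : ℝ) (hε : 0 < ε) :
    ∃ K : ℝ, 0 < K ∧ ∃ n₀ : ℕ, ∀ n ≥ n₀,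
      ∃ 𝒞 : Finset (Finset (Finset ℕ)),
        (∀ C ∈ 𝒞, IsKGraphOn k n C) ∧
        ((𝒞.card : ℝ) ≤
          Real.exp (K * (Real.log n) ^ 2 * (n.choose (k - 1) : ℝ) / (n : ℝ) ^ (k - ℓ - 1))) ∧
        (∀ I : Finset (Finset ℕ), IsKGraphOn k n I → HFree H I → ∃ C ∈ 𝒞, I ⊆ C) ∧
        (∀ C ∈ 𝒞, (C.card : ℝ) ≤ ((σ : ℝ) - 1 + ε) * (n.choose (k - 1) : ℝ)) := by
  by_cases hℓ : ℓ ≤ k - 1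
  · exact main_of_le k ℓ σ hk hℓ H hH h2 hov hσ ε hε
  · have hov' : Overlapping (k - 1) H := by
      intro E hE F hF hne
      have h1 : (E ∩ F).card < E.card := by
        apply Finset.card_lt_card
        refine ⟨Finset.inter_subset_left, fun hsub => hne ?_⟩
        have h3 : E ⊆ F := fun x hx => (Finset.mem_inter.1 (hsub hx)).2
        exact Finset.eq_of_subset_of_card_le h3 (by rw [hH.2 E hE, hH.2 F hF])
      rw [hH.2 E hE] at h1
      omega
    have h := main_of_le k (k - 1) σ hk le_rfl H hH h2 hov' hσ ε hε
    have e1 : k - (k - 1) - 1 = k - ℓ - 1 := by omega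
    rw [e1] at h
    exact h
end

section
/- For all integers k ≥ 5 and ℓ ≥ 3, there exists a 2-contractible k-tree T that contains the k-uniform linear cycle C^(k)_ℓ as a subgraph and has cross-cut number σ(T) = ⌊(ℓ+1)/2⌋. -/
open Finset Filter

attribute [local instance] Classical.propDecidable

/-- Core vertices of the `n`-th edge: first the triangulation of the polygon, then its sides. -/
def coreT (l n : ℕ) : Finset ℕ :=
  if n < l - 2 then
    (if n % 2 = 0 then {0, n + 1, min (n + 3) (l - 1)} else {n, n + 1, n + 2})
  else {n - (l - 2), if n - (l - 2) + 1 = l then 0 else n - (l - 2) + 1}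

/-- The `n`-th edge: core vertices together with private vertices. -/
def edgeT (k l n : ℕ) : Finset ℕ :=
  coreT l n ∪ (range (k - (coreT l n).card)).image (fun t => l + Nat.pair n t)

lemma coreT_card (l n : ℕ) : (coreT l n).card ≤ 3 := by
  unfold coreT
  split_ifs
  · exact card_le_three
  · exact card_le_three
  · exact card_le_two.trans (by norm_num)
  · exact card_le_two.trans (by norm_num)

lemma mem_coreT (l n v : ℕ) : v ∈ coreT l n ↔
    (n < l - 2 ∧ n % 2 = 0 ∧ (v = 0 ∨ v = n + 1 ∨ v = min (n + 3) (l - 1))) ∨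
    (n < l - 2 ∧ n % 2 = 1 ∧ (v = n ∨ v = n + 1 ∨ v = n + 2)) ∨
    (l - 2 ≤ n ∧ (v = n - (l - 2) ∨ (n - (l - 2) + 1 = l ∧ v = 0) ∨
      (n - (l - 2) + 1 ≠ l ∧ v = n - (l - 2) + 1))) := by
  unfold coreT
  split_ifs <;> simp only [mem_insert, mem_singleton] <;> omega

lemma coreT_lt {l n v : ℕ} (hl : 3 ≤ l) (hn : n < 2 * l - 2) (h : v ∈ coreT l n) : v < l := by
  rw [mem_coreT] at h
  omega

lemma mem_edgeT (k l n v : ℕ) : v ∈ edgeT k l n ↔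
    v ∈ coreT l n ∨ ∃ t < k - (coreT l n).card, v = l + Nat.pair n t := by
  simp [edgeT, eq_comm]

lemma priv_mem {k l n m t : ℕ} (hl : 3 ≤ l) (hn : n < 2 * l - 2) 
    (h : l + Nat.pair m t ∈ edgeT k l n) : n = m := by
  rw [mem_edgeT] at h
  rcases h with h | ⟨s, _, h⟩
  · have := coreT_lt hl hn h
    omega
  · have := Nat.pair_eq_pair.1 (Nat.add_left_cancel h)
    exact this.1.symm

lemma mem_two {k l n m v : ℕ} (hl : 3 ≤ l) (hn : n < 2 * l - 2) (hm : m < 2 * l - 2) 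
    (hnm : n ≠ m) (h : v ∈ edgeT k l n) (h' : v ∈ edgeT k l m) :
    v ∈ coreT l n ∧ v ∈ coreT l m := by
  have h1 := h
  have h2 := h'
  rw [mem_edgeT] at h1 h2
  rcases h1 with h1 | ⟨s, _, rfl⟩
  · rcases h2 with h2 | ⟨s, _, rfl⟩
    · exact ⟨h1, h2⟩
    · exact absurd (priv_mem hl hn h) hnm
  · exact absurd (priv_mem hl hm h').symm hnm

lemma priv_in {k l n t : ℕ} (hk : 5 ≤ k) (ht : t < 2) : l + Nat.pair n t ∈ edgeT k l n := by
  rw [mem_edgeT]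
  have := coreT_card l n
  exact Or.inr ⟨t, by omega, rfl⟩

lemma edgeT_inj {k l n m : ℕ} (hk : 5 ≤ k) (hl : 3 ≤ l) (hn : n < 2 * l - 2)
    (h : edgeT k l n = edgeT k l m) : n = m := by
  have h1 : l + Nat.pair m 0 ∈ edgeT k l m := priv_in hk (by norm_num)
  rw [← h] at h1
  exact priv_mem hl hn h1

lemma edgeT_card {k l n : ℕ} (hk : 5 ≤ k) (hl : 3 ≤ l) (hn : n < 2 * l - 2) :
    (edgeT k l n).card = k := by
  unfold edgeT
  rw [card_union_of_disjoint, card_image_of_injective, card_range]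
  · have := coreT_card l n
    omega
  · intro a b h
    exact (Nat.pair_eq_pair.1 (Nat.add_left_cancel h)).2
  · rw [disjoint_left]
    intro a ha hb
    simp only [mem_image] at hb
    obtain ⟨t, _, rfl⟩ := hb
    have := coreT_lt hl hn ha
    omega

set_option maxHeartbeats 4000000 in
lemma parentT {l n : ℕ} (hl : 3 ≤ l) (hn : n < 2 * l - 2) (h0 : 1 ≤ n) :
    ∃ p < n, ∀ m < n, ∀ v, v ∈ coreT l n → v ∈ coreT l m → v ∈ coreT l p := by
  by_cases h : n < l - 2
  · rcases Nat.mod_two_eq_zero_or_one n with h2 | h2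
    · refine ⟨n - 2, by omega, fun m hm v h3 h4 => ?_⟩
      rw [mem_coreT] at *
      omega
    · refine ⟨n - 1, by omega, fun m hm v h3 h4 => ?_⟩
      rw [mem_coreT] at *
      omega
  · obtain ⟨i, rfl⟩ : ∃ i, n = l - 2 + i := ⟨n - (l - 2), by omega⟩
    suffices ∃ p < l - 2, ∀ v, v ∈ coreT l (l - 2 + i) → v ∈ coreT l p by
      obtain ⟨p, hp, h5⟩ := this
      exact ⟨p, by omega, fun m hm v h3 h4 => h5 v h3⟩
    simp only [mem_coreT]
    by_cases hi0 : i = 0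
    · exact ⟨0, by omega, fun v hv => by omega⟩
    by_cases hi1 : i = l - 1
    · rcases Nat.mod_two_eq_zero_or_one l with h2 | h2
      · exact ⟨l - 4, by omega, fun v hv => by omega⟩
      · exact ⟨l - 3, by omega, fun v hv => by omega⟩
    rcases Nat.mod_two_eq_zero_or_one i with h2 | h2
    · exact ⟨i - 1, by omega, fun v hv => by omega⟩
    by_cases hi2 : i = l - 2
    · exact ⟨l - 3, by omega, fun v hv => by omega⟩
    · exact ⟨i, by omega, fun v hv => by omega⟩

lemma treeT {k l : ℕ} (hk : 5 ≤ k) (hl : 3 ≤ l) (n : ℕ) (hn : n < 2 * l - 2) :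
    IsHypertree ((range (n + 1)).image (edgeT k l)) := by
  induction n with
  | zero => simpa using IsHypertree.single (edgeT k l 0)
  | succ n ih =>
    rw [range_add_one, image_insert]
    obtain ⟨p, hp, h⟩ := parentT hl hn (by omega)
    refine IsHypertree.grow _ (edgeT k l p) (ih (by omega)) ?_ ?_ ?_
    · intro h1
      obtain ⟨m, hm, h2⟩ := mem_image.1 h1
      rw [mem_range] at hm
      have := edgeT_inj hk hl (by omega) h2
      omega
    · exact mem_image_of_mem _ (mem_range.2 hp)
    · ext v
      simp only [vertexSet, mem_inter, Finset.mem_sup, mem_image, mem_range, id]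
      constructor
      · rintro ⟨h1, E, ⟨m, hm, rfl⟩, h2⟩
        refine ⟨h1, ?_⟩
        have h3 := mem_two hl hn (by omega) (by omega) h1 h2
        rw [mem_edgeT]
        exact Or.inl (h m hm v h3.1 h3.2)
      · rintro ⟨h1, h2⟩
        exact ⟨h1, _, ⟨p, hp, rfl⟩, h2⟩

lemma vdegT {k l n t : ℕ} (hk : 5 ≤ k) (hl : 3 ≤ l) (hn : n < 2 * l - 2) (ht : t < 2) :
    vdeg ((range (2 * l - 2)).image (edgeT k l)) (l + Nat.pair n t) = 1 := by
  unfold vdeg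
  rw [card_eq_one]
  refine ⟨edgeT k l n, ?_⟩
  ext E
  simp only [mem_filter, mem_image, mem_range, mem_singleton]
  constructor
  · rintro ⟨⟨m, hm, rfl⟩, h⟩
    rw [priv_mem hl hm h]
  · rintro rfl
    exact ⟨⟨n, hn, rfl⟩, priv_in hk ht⟩

lemma contrT {k l : ℕ} (hk : 5 ≤ k) (hl : 3 ≤ l) :
    TwoContractible ((range (2 * l - 2)).image (edgeT k l)) := by
  intro E hE
  obtain ⟨n, hn, rfl⟩ := mem_image.1 hE
  rw [mem_range] at hn
  have h0 := priv_in (l := l) (n := n) hk (t := 0) (by norm_num)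
  have h1 := priv_in (l := l) (n := n) hk (t := 1) (by norm_num)
  have g0 := vdegT hk hl hn (t := 0) (by norm_num)
  have g1 := vdegT hk hl hn (t := 1) (by norm_num)
  have hne : l + Nat.pair n 0 ≠ l + Nat.pair n 1 := by
    intro h
    have := (Nat.pair_eq_pair.1 (Nat.add_left_cancel h)).2
    omega
  generalize l + Nat.pair n 0 = a at *
  generalize l + Nat.pair n 1 = b at *
  refine le_trans (card_pair hne).ge (card_le_card ?_)
  intro v hv
  simp only [mem_insert, mem_singleton] at hv
  rw [mem_filter]
  rcases hv with rfl | rfl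
  · exact ⟨h0, g0⟩
  · exact ⟨h1, g1⟩

lemma modT {l i : ℕ} (hi : i < l) :
    (i + 1 = l ∧ (i + 1) % l = 0) ∨ (i + 1 < l ∧ (i + 1) % l = i + 1) := by
  by_cases h : i + 1 = l
  · exact Or.inl ⟨h, by rw [h, Nat.mod_self]⟩
  · exact Or.inr ⟨by omega, Nat.mod_eq_of_lt (by omega)⟩

lemma mem_side {l i v : ℕ} : v ∈ coreT l (l - 2 + i) ↔
    (v = i ∨ (i + 1 = l ∧ v = 0) ∨ (i + 1 ≠ l ∧ v = i + 1)) := by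
  rw [mem_coreT]
  omega

lemma interT {k l i : ℕ} (hl : 3 ≤ l) (hi : i < l) :
    edgeT k l (l - 2 + i) ∩ edgeT k l (l - 2 + (i + 1) % l) = {(i + 1) % l} := by
  have hm := modT hi
  generalize (i + 1) % l = j at *
  ext v
  rw [mem_inter, mem_singleton]
  constructor
  · rintro ⟨h1, h2⟩
    have h := mem_two hl (by omega) (by omega) (by omega) h1 h2
    rw [mem_side, mem_side] at h
    omega
  · rintro rfl
    rw [mem_edgeT, mem_edgeT, mem_side, mem_side]
    exact ⟨Or.inl (by omega), Or.inl (by omega)⟩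

lemma cycleT {k l : ℕ} (hk : 5 ≤ k) (hl : 3 ≤ l) :
    IsLinearCycle k l ((range l).image fun i => edgeT k l (l - 2 + i)) := by
  refine ⟨fun i => edgeT k l (l - 2 + i), ?_, ?_, ?_, ?_, ?_, rfl⟩
  · intro i hi
    exact edgeT_card hk hl (by omega)
  · intro i hi j hj hij h
    have := edgeT_inj hk hl (by omega) h
    omega
  · intro i hi
    simp only [interT hl hi, card_singleton]
  · intro i hi j hj hij h
    simp only [interT hl hi, interT hl hj, singleton_inj] at h
    have h1 := modT hi
    have h2 := modT hj
    omega
  · intro i hi j hj hij h3 h4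
    have h1 := modT hi
    have h2 := modT hj
    rw [disjoint_left]
    intro v h5 h6
    have h := mem_two hl (by omega) (by omega) (by omega) h5 h6
    rw [mem_side, mem_side] at h
    omega

/-- The minimum cross-cut. -/
def cutT (l : ℕ) : Finset ℕ :=
  (range (l / 2)).image (fun a => 2 * a) ∪
    if l % 2 = 1 then {l + Nat.pair (l - 2 + (l - 2)) 0} else ∅

lemma mem_cutT (l v : ℕ) : v ∈ cutT l ↔
    (v % 2 = 0 ∧ v < 2 * (l / 2)) ∨ (l % 2 = 1 ∧ v = l + Nat.pair (l - 2 + (l - 2)) 0) := by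
  unfold cutT
  rw [mem_union, mem_image]
  apply or_congr
  · constructor
    · rintro ⟨a, ha, rfl⟩
      rw [mem_range] at ha
      omega
    · intro h
      exact ⟨v / 2, mem_range.2 (by omega), by omega⟩
  · split_ifs with h <;> simp [h]

lemma cutT_card (l : ℕ) : (cutT l).card = (l + 1) / 2 := by
  unfold cutT
  have h1 : ((range (l / 2)).image (fun a => 2 * a)).card = l / 2 := by
    rw [card_image_of_injective, card_range]
    intro a b h
    simp only at h
    omega
  split_ifs with h
  · rw [card_union_of_disjoint, h1, card_singleton]
    · omega
    · rw [disjoint_left]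
      intro a ha hb
      rw [mem_singleton] at hb
      obtain ⟨c, hc, rfl⟩ := mem_image.1 ha
      rw [mem_range] at hc
      omega
  · rw [union_empty, h1]
    omega

lemma core_cut {l n : ℕ} (hl : 3 ≤ l) (hn : n < 2 * l - 2) (hne : ¬ (l % 2 = 1 ∧ n = l - 2 + (l - 2))) :
    ∃ v ∈ coreT l n, (v % 2 = 0 ∧ v < 2 * (l / 2)) ∧
      ∀ w ∈ coreT l n, w % 2 = 0 → w < 2 * (l / 2) → w = v := by
  simp only [mem_coreT]
  by_cases h : n < l - 2
  · rcases Nat.mod_two_eq_zero_or_one n with h2 | h2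
    · exact ⟨0, by omega, by omega, fun w hw => by omega⟩
    · exact ⟨n + 1, by omega, by omega, fun w hw => by omega⟩
  · obtain ⟨i, rfl⟩ : ∃ i, n = l - 2 + i := ⟨n - (l - 2), by omega⟩
    by_cases h1 : i = l - 1
    · exact ⟨0, by omega, by omega, fun w hw => by omega⟩
    rcases Nat.mod_two_eq_zero_or_one i with h2 | h2
    · exact ⟨i, by omega, by omega, fun w hw => by omega⟩
    · exact ⟨i + 1, by omega, by omega, fun w hw => by omega⟩

lemma cut_isCrosscut {k l : ℕ} (hk : 5 ≤ k) (hl : 3 ≤ l) :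
    IsCrosscut ((range (2 * l - 2)).image (edgeT k l)) (cutT l) := by
  intro E hE
  obtain ⟨n, hn, rfl⟩ := mem_image.1 hE
  rw [mem_range] at hn
  rw [card_eq_one]
  by_cases hne : l % 2 = 1 ∧ n = l - 2 + (l - 2)
  · refine ⟨l + Nat.pair n 0, ?_⟩
    ext v
    rw [mem_inter, mem_singleton, mem_cutT]
    constructor
    · rintro ⟨h1, h2 | h2⟩
      · rw [mem_edgeT] at h1
        rcases h1 with h1 | ⟨t, _, rfl⟩
        · rw [mem_coreT] at h1
          omega
        · omega
      · rw [h2.2, hne.2]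
    · rintro rfl
      exact ⟨priv_in hk (by norm_num), Or.inr ⟨hne.1, by rw [← hne.2]⟩⟩
  · obtain ⟨v, hv, hv2, hu⟩ := core_cut hl hn hne
    refine ⟨v, ?_⟩
    ext w
    rw [mem_inter, mem_singleton, mem_cutT]
    constructor
    · rintro ⟨h1, h2 | h2⟩
      · rw [mem_edgeT] at h1
        rcases h1 with h1 | ⟨t, _, rfl⟩
        · exact hu w h1 h2.1 h2.2
        · omega
      · obtain ⟨h2, rfl⟩ := h2
        exact absurd ⟨h2, priv_mem hl hn h1⟩ hne
    · rintro rfl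
      exact ⟨by rw [mem_edgeT]; exact Or.inl hv, Or.inl hv2⟩

lemma side_deg {k l : ℕ} (hl : 3 ≤ l) (v : ℕ) :
    ((range l).filter fun i => v ∈ edgeT k l (l - 2 + i)).card ≤ 2 := by
  by_cases h : v < l
  · refine le_trans (card_le_card (t := {v, if v = 0 then l - 1 else v - 1}) ?_) card_le_two
    intro i hi
    rw [mem_filter, mem_range, mem_edgeT, mem_side] at hi
    rw [mem_insert, mem_singleton]
    obtain ⟨hi, h1 | ⟨t, _, h1⟩⟩ := hi
    · split_ifs <;> omega
    · omega
  · refine le_trans (card_le_card (t := {(Nat.unpair (v - l)).1 - (l - 2)}) ?_) (by simp)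
    intro i hi
    rw [mem_filter, mem_range, mem_edgeT, mem_side] at hi
    rw [mem_singleton]
    obtain ⟨hi, h1 | ⟨t, _, h1⟩⟩ := hi
    · omega
    · rw [h1, Nat.add_sub_cancel_left, Nat.unpair_pair]
      simp

lemma cut_lower {k l : ℕ} (hl : 3 ≤ l) (S : Finset ℕ)
    (hS : IsCrosscut ((range (2 * l - 2)).image (edgeT k l)) S) : (l + 1) / 2 ≤ S.card := by
  have h1 : ∑ i ∈ range l, (S.filter fun v => v ∈ edgeT k l (l - 2 + i)).card = l := by
    rw [sum_congr rfl (g := fun _ => 1)]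
    · simp
    · intro i hi
      rw [mem_range] at hi
      rw [← hS (edgeT k l (l - 2 + i)) (mem_image_of_mem _ (mem_range.2 (by omega)))]
      congr 1
      ext v
      rw [mem_filter, mem_inter, and_comm]
  have h2 : ∑ i ∈ range l, (S.filter fun v => v ∈ edgeT k l (l - 2 + i)).card =
      ∑ v ∈ S, ((range l).filter fun i => v ∈ edgeT k l (l - 2 + i)).card := by
    simp only [card_filter]
    exact sum_comm
  have h3 : ∑ v ∈ S, ((range l).filter fun i => v ∈ edgeT k l (l - 2 + i)).card ≤ S.card * 2 :=
    sum_le_card_nsmul _ _ _ fun v _ => side_deg hl v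
  omega

/-- for all `k ≥ 5` and `ℓ ≥ 3` there is a 2-contractible `k`-tree `T`
containing the `k`-uniform linear cycle `C^(k)_ℓ` as a subgraph with cross-cut number
`σ(T) = ⌊(ℓ+1)/2⌋`. -/
theorem stmt_19 (k ℓ : ℕ) (hk : 5 ≤ k) (hℓ : 3 ≤ ℓ) :
    ∃ T : Finset (Finset ℕ), IsKTree k T ∧ TwoContractible T ∧
      (∃ C ⊆ T, IsLinearCycle k ℓ C) ∧
      IsCrosscutNumber T ((ℓ + 1) / 2) := by
  refine ⟨(range (2 * ℓ - 2)).image (edgeT k ℓ), ⟨?_, ?_⟩, contrT hk hℓ,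
    ⟨_, ?_, cycleT hk hℓ⟩, ⟨⟨cutT ℓ, cut_isCrosscut hk hℓ, cutT_card ℓ⟩, ?_⟩⟩
  · have := treeT hk hℓ (2 * ℓ - 3) (by omega)
    rwa [show 2 * ℓ - 3 + 1 = 2 * ℓ - 2 by omega] at this
  · intro E hE
    obtain ⟨n, hn, rfl⟩ := mem_image.1 hE
    exact edgeT_card hk hℓ (mem_range.1 hn)
  · intro E hE
    obtain ⟨i, hi, rfl⟩ := mem_image.1 hE
    rw [mem_range] at hi
    exact mem_image_of_mem _ (mem_range.2 (by omega))
  · rintro m ⟨S, hS, rfl⟩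
    exact cut_lower hℓ S hS
end
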